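/- arXiv:1408.3801 — 4 statements merged into one kernel-verified Lean document; each statement's English description precedes it below -/
import Mathlib

section
/- Suppose X is a Polish space, T : X → X is a Borel function, and B ⊆ X is a Borel set on which the tail equivalence relation E_t(T) has all classes countable (i.e., for every x ∈ B, {y ∈ B : x E_t(T) y} is countable). Then A = ⋃_{n ∈ ℕ} T^n(B) is a Borel T-stable set (T(A) ⊆ A) containing B on which E_t(T) still has all classes countable. -/
open Set

namespace LN

open MeasureTheory Filter Topology

/-- An analytic set on which `f` is injective is contained in a Borel such set. -/
lemma exists_borel_injOn {Z Y : Type*} [TopologicalSpace Z] [PolishSpace Z] [MeasurableSpace Z]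
    [BorelSpace Z] [TopologicalSpace Y] [T2Space Y] [MeasurableSpace Y] [BorelSpace Y]
    {f : Z → Y} (hf : Continuous f) {A : Set Z} (hA : AnalyticSet A) (hinj : InjOn f A) :
    ∃ C, MeasurableSet C ∧ A ⊆ C ∧ InjOn f C := by
  have inter : ∀ D : Set Z, MeasurableSet D → AnalyticSet (A ∩ D) := by
    intro D hD
    rw [inter_eq_iInter]
    refine AnalyticSet.iInter fun b => ?_
    cases b
    · exact hD.analyticSet
    · exact hA
  have key : ∀ U : TopologicalSpace.countableBasis Z, ∃ C : Set Y, f '' (A ∩ U) ⊆ C ∧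
      Disjoint (f '' (A ∩ (U : Set Z)ᶜ)) C ∧ MeasurableSet C := by
    intro U
    have hU : MeasurableSet (U : Set Z) :=
      (TopologicalSpace.isOpen_of_mem_countableBasis U.2).measurableSet
    apply AnalyticSet.measurablySeparable
    · exact (inter _ hU).image_of_continuous hf
    · exact (inter _ hU.compl).image_of_continuous hf
    · rw [disjoint_left]
      rintro _ ⟨x, ⟨hxA, hxU⟩, rfl⟩ ⟨y, ⟨hyA, hyU⟩, hxy⟩
      exact hyU (hinj hyA hxA hxy ▸ hxU)
  choose C hC1 hC2 hC3 using key
  have : Countable (TopologicalSpace.countableBasis Z) :=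
    (TopologicalSpace.countable_countableBasis Z).to_subtype
  refine ⟨⋂ U : TopologicalSpace.countableBasis Z, {x | x ∈ (U : Set Z) ↔ f x ∈ C U}, ?_, ?_, ?_⟩
  · refine MeasurableSet.iInter fun U => ?_
    have hU : MeasurableSet (U : Set Z) :=
      (TopologicalSpace.isOpen_of_mem_countableBasis U.2).measurableSet
    have h2 : MeasurableSet (f ⁻¹' C U) := hf.measurable (hC3 U)
    exact MeasurableSet.iff hU h2
  · intro x hx
    refine mem_iInter.2 fun U => ⟨fun h => hC1 U ⟨x, ⟨hx, h⟩, rfl⟩, fun h => ?_⟩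
    by_contra h'
    exact disjoint_left.1 (hC2 U) ⟨x, ⟨hx, h'⟩, rfl⟩ h
  · intro x hx y hy hxy
    by_contra hne
    obtain ⟨U, hU, hxU, hyU⟩ :=
      (TopologicalSpace.isBasis_countableBasis Z).exists_subset_of_mem_open
        (show x ∈ ({y}ᶜ : Set Z) from hne) isOpen_compl_singleton
    have h1 := (mem_iInter.1 hx ⟨U, hU⟩).1 hxU
    rw [hxy] at h1
    exact hyU ((mem_iInter.1 hy ⟨U, hU⟩).2 h1) rfl

/-- Covered by countably many Borel sets on which `f` is injective. -/
def Small {Z Y : Type*} [MeasurableSpace Z] (f : Z → Y) (s : Set Z) : Prop :=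
  ∃ c : Set (Set Z), c.Countable ∧ (∀ t ∈ c, MeasurableSet t ∧ InjOn f t) ∧ s ⊆ ⋃₀ c

lemma Small.iUnion {Z Y ι : Type*} [Countable ι] [MeasurableSpace Z] {f : Z → Y} {s : ι → Set Z}
    (h : ∀ i, Small f (s i)) : Small f (⋃ i, s i) := by
  choose c h1 h2 h3 using h
  refine ⟨⋃ i, c i, countable_iUnion h1, ?_, ?_⟩
  · intro t ht
    obtain ⟨i, hi⟩ := mem_iUnion.1 ht
    exact h2 i t hi
  · intro x hx
    obtain ⟨i, hi⟩ := mem_iUnion.1 hx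
    obtain ⟨t, ht, hxt⟩ := h3 i hi
    exact ⟨t, mem_iUnion.2 ⟨i, ht⟩, hxt⟩

/-- A family of sets is alive if, after removal of any small set, some fiber meets all members. -/
def Alive {Z Y : Type*} [MeasurableSpace Z] (f : Z → Y) (S : Set (Set Z)) : Prop :=
  ∀ D : Set Z, MeasurableSet D → Small f Dᶜ → ∃ y, ∀ U ∈ S, y ∈ f '' (U ∩ D)

/-- `V`, `W` are a good splitting of `U`. -/
structure Good {Z : Type*} [MetricSpace Z] (ε : ENNReal) (U V W : Set Z) : Prop where
  oV : IsOpen V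
  oW : IsOpen W
  cV : closure V ⊆ U
  cW : closure W ⊆ U
  dV : Metric.ediam V ≤ ε
  dW : Metric.ediam W ≤ ε
  disj : Disjoint V W

lemma exists_basic {Z : Type*} [MetricSpace Z] [SecondCountableTopology Z] {ε : ENNReal}
    (hε : 0 < ε) {O : Set Z} (hO : IsOpen O) {x : Z} (hx : x ∈ O) :
    ∃ V ∈ TopologicalSpace.countableBasis Z, x ∈ V ∧ closure V ⊆ O ∧ Metric.ediam V ≤ ε := by
  obtain ⟨K, hK, hKc, hKO⟩ := exists_mem_nhds_isClosed_subset (hO.mem_nhds hx)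
  have hε2 : 0 < ε / 2 := ENNReal.half_pos hε.ne'
  obtain ⟨V, hV, hxV, hVs⟩ :=
    (TopologicalSpace.isBasis_countableBasis Z).mem_nhds_iff.1
      (inter_mem hK (Metric.eball_mem_nhds x hε2))
  refine ⟨V, hV, hxV, ?_, ?_⟩
  · exact (closure_minimal (hVs.trans inter_subset_left) hKc).trans hKO
  · refine (Metric.ediam_mono (hVs.trans inter_subset_right)).trans ?_
    refine Metric.ediam_eball_le.trans ?_
    rw [ENNReal.mul_div_cancel (by simp) (by simp)]

variable {Z Y : Type*} [MetricSpace Z] [CompleteSpace Z] [SecondCountableTopology Z]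
  [MeasurableSpace Z] [BorelSpace Z] [TopologicalSpace Y] [T2Space Y] [MeasurableSpace Y]
  [BorelSpace Y] {f : Z → Y}

lemma split_one (hf : Continuous f) {S : Set (Set Z)} (hS : S.Finite) (ho : ∀ U ∈ S, IsOpen U)
    (ha : Alive f S) {U : Set Z} (hU : U ∈ S) {ε : ENNReal} (hε : 0 < ε) :
    ∃ V W, Good ε U V W ∧ Alive f (S ∪ {V, W}) := by
  by_contra hcon
  push Not at hcon
  let I := {p : TopologicalSpace.countableBasis Z × TopologicalSpace.countableBasis Z //
    Good ε U (p.1 : Set Z) p.2}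
  have : Countable (TopologicalSpace.countableBasis Z) :=
    (TopologicalSpace.countable_countableBasis Z).to_subtype
  have h1 : ∀ p : I, ∃ D : Set Z, MeasurableSet D ∧ Small f Dᶜ ∧
      ¬ ∃ y, ∀ U' ∈ S ∪ {(p.1.1 : Set Z), (p.1.2 : Set Z)}, y ∈ f '' (U' ∩ D) := by
    intro p
    have := hcon _ _ p.2
    unfold Alive at this
    push Not at this
    obtain ⟨D, h1, h2, h3⟩ := this
    refine ⟨D, h1, h2, ?_⟩
    push Not
    exact h3
  choose D hDm hDs hDn using h1
  have hD'm : MeasurableSet (⋂ p, D p) := MeasurableSet.iInter hDm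
  have hD's : Small f (⋂ p, D p)ᶜ := by
    rw [compl_iInter]
    exact Small.iUnion hDs
  set D' := ⋂ p, D p with hD'
  have hmem : ∀ p, D' ⊆ D p := fun p => iInter_subset _ p
  let A : Set Z := ⋂ U' : S, ((U ∩ D') ∩ f ⁻¹' (f '' ((U' : Set Z) ∩ D')))
  have hAan : AnalyticSet A := by
    have : Nonempty S := ⟨⟨U, hU⟩⟩
    have : Countable S := hS.countable.to_subtype
    refine AnalyticSet.iInter fun U' => ?_
    rw [inter_eq_iInter]
    refine AnalyticSet.iInter fun b => ?_
    cases b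
    · exact (((ho _ U'.2).measurableSet.inter hD'm).analyticSet.image_of_continuous hf).preimage hf
    · exact ((ho _ hU).measurableSet.inter hD'm).analyticSet
  have hAinj : InjOn f A := by
    intro x hx x' hx' hxx
    by_contra hne
    have hxU := (mem_iInter.1 hx ⟨U, hU⟩).1
    have hxU' := (mem_iInter.1 hx' ⟨U, hU⟩).1
    obtain ⟨O, O', hO, hO', hxO, hxO', hd⟩ := t2_separation hne
    obtain ⟨V, hV, hxV, hVc, hVd⟩ := exists_basic hε ((ho U hU).inter hO) ⟨hxU.1, hxO⟩
    obtain ⟨W, hW, hxW, hWc, hWd⟩ := exists_basic hε ((ho U hU).inter hO') ⟨hxU'.1, hxO'⟩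
    have hg : Good ε U V W :=
      ⟨TopologicalSpace.isOpen_of_mem_countableBasis hV,
        TopologicalSpace.isOpen_of_mem_countableBasis hW,
        hVc.trans inter_subset_left, hWc.trans inter_subset_left, hVd, hWd,
        hd.mono ((subset_closure.trans hVc).trans inter_subset_right)
          ((subset_closure.trans hWc).trans inter_subset_right)⟩
    let p : I := ⟨(⟨V, hV⟩, ⟨W, hW⟩), hg⟩
    apply hDn p
    refine ⟨f x, ?_⟩
    rintro U' (hU' | rfl | rfl)
    · exact image_mono (inter_subset_inter_right _ (hmem p)) (mem_iInter.1 hx ⟨U', hU'⟩).2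
    · exact ⟨x, ⟨hxV, hmem p hxU.2⟩, rfl⟩
    · exact ⟨x', ⟨hxW, hmem p hxU'.2⟩, hxx.symm⟩
  obtain ⟨C, hCm, hAC, hCinj⟩ := exists_borel_injOn hf hAan hAinj
  have hs : Small f (D' \ C)ᶜ := by
    obtain ⟨c, h1, h2, h3⟩ := hD's
    refine ⟨insert C c, h1.insert C, ?_, ?_⟩
    · rintro t (rfl | ht)
      · exact ⟨hCm, hCinj⟩
      · exact h2 t ht
    · intro x hx
      by_cases hxC : x ∈ C
      · exact ⟨C, mem_insert _ _, hxC⟩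
      · have : x ∈ D'ᶜ := fun h => hx ⟨h, hxC⟩
        obtain ⟨t, ht, hxt⟩ := h3 this
        exact ⟨t, mem_insert_of_mem _ ht, hxt⟩
  obtain ⟨y, hy⟩ := ha _ (hD'm.diff hCm) hs
  obtain ⟨x, ⟨hxU, hxD, hxC⟩, rfl⟩ := hy U hU
  apply hxC
  apply hAC
  refine mem_iInter.2 fun U' => ⟨⟨hxU, hxD⟩, ?_⟩
  exact image_mono (inter_subset_inter_right _ sdiff_subset) (hy U' U'.2)

/-- A finite alive family of open sets. -/
def State (f : Z → Y) := {S : Set (Set Z) // S.Finite ∧ (∀ U ∈ S, IsOpen U) ∧ Alive f S}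

lemma split_all (hf : Continuous f) {ε : ENNReal} (hε : 0 < ε) (S : State f) :
    ∃ (S' : State f) (V : Bool → Set Z → Set Z), (∀ U ∈ S.1, Good ε U (V true U) (V false U)) ∧
      ∀ U ∈ S.1, ∀ b, V b U ∈ S'.1 := by
  classical
  obtain ⟨S, hS, ho, ha⟩ := S
  suffices H : ∃ (S' : State f) (V : Bool → Set Z → Set Z), S ⊆ S'.1 ∧
      (∀ U ∈ S, Good ε U (V true U) (V false U)) ∧ ∀ U ∈ S, ∀ b, V b U ∈ S'.1 by
    obtain ⟨S', V, -, h⟩ := H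
    exact ⟨S', V, h⟩
  suffices H : ∀ R : Set (Set Z), R.Finite → R ⊆ S →
      ∃ (S' : State f) (V : Bool → Set Z → Set Z), S ⊆ S'.1 ∧
      (∀ U ∈ R, Good ε U (V true U) (V false U)) ∧ ∀ U ∈ R, ∀ b, V b U ∈ S'.1 from
    H S hS Subset.rfl
  intro R hR
  induction R, hR using Set.Finite.induction_on with
  | empty => exact fun _ => ⟨⟨S, hS, ho, ha⟩, fun _ _ => ∅, Subset.rfl, by simp, by simp⟩
  | @insert U R hUR hR ih =>
    intro hsub
    obtain ⟨⟨S', hS', ho', ha'⟩, V, h1, h2, h3⟩ := ih ((subset_insert _ _).trans hsub)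
    obtain ⟨P, Q, hg, hal⟩ := split_one hf hS' ho' ha' (h1 (hsub (mem_insert _ _))) hε
    refine ⟨⟨S' ∪ {P, Q}, hS'.union (by simp), ?_, hal⟩,
      fun b => Function.update (V b) U (if b then P else Q), ?_, ?_, ?_⟩
    · rintro O (hO | rfl | rfl)
      · exact ho' _ hO
      · exact hg.oV
      · exact hg.oW
    · exact h1.trans subset_union_left
    · rintro O (rfl | hO)
      · simpa using hg
      · have : O ≠ U := fun h => hUR (h ▸ hO)
        simpa [Function.update_of_ne this] using h2 O hO
    · rintro O (rfl | hO) b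
      · cases b <;> simp
      · have : O ≠ U := fun h => hUR (h ▸ hO)
        simp only [Function.update_of_ne this]
        exact Or.inl (h3 O hO b)

lemma small_univ (hf : Continuous f) (hc : ∀ y, (f ⁻¹' {y}).Countable) : Small f univ := by
  by_contra hns
  have hε : ∀ n : ℕ, (0 : ENNReal) < ((n : ENNReal) + 1)⁻¹ := by
    intro n
    exact ENNReal.inv_pos.2 (by finiteness)
  choose S' V hV hVS using fun (n : ℕ) (S : State f) => split_all hf (hε n) S
  have ha0 : Alive f {(univ : Set Z)} := by
    intro D hD hDs
    have : D.Nonempty := by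
      rw [nonempty_iff_ne_empty]
      rintro rfl
      exact hns (by simpa using hDs)
    obtain ⟨x, hx⟩ := this
    exact ⟨f x, by rintro U rfl; exact ⟨x, ⟨mem_univ _, hx⟩, rfl⟩⟩
  let S0 : State f := ⟨{univ}, by simp, by simp, ha0⟩
  let S : ℕ → State f := fun n => Nat.rec S0 (fun n s => S' n s) n
  let A : List Bool → Set Z := fun l =>
    List.rec univ (fun b l s => V l.length (S l.length) b s) l
  have hA : ∀ b l, A (b :: l) = V l.length (S l.length) b (A l) := fun _ _ => rfl
  have hAS : ∀ l : List Bool, A l ∈ (S l.length).1 := by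
    intro l
    induction l with
    | nil => exact rfl
    | cons b l ih => exact hVS l.length (S l.length) _ ih b
  have hgood : ∀ l, Good ((l.length : ENNReal) + 1)⁻¹ (A l) (A (true :: l)) (A (false :: l)) :=
    fun l => hV l.length (S l.length) _ (hAS l)
  have hanti : CantorScheme.ClosureAntitone A := by
    intro l b
    cases b
    · exact (hgood l).cW
    · exact (hgood l).cV
  have hdisj : CantorScheme.Disjoint A := by
    intro l a b hab
    cases a <;> cases b
    · exact absurd rfl hab
    · exact (hgood l).disj.symm
    · exact (hgood l).disj
    · exact absurd rfl hab
  have hdiam : CantorScheme.VanishingDiam A := by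
    intro x
    rw [← tendsto_add_atTop_iff_nat 1]
    have h0 : Tendsto (fun n : ℕ => ((n : ENNReal) + 1)⁻¹) atTop (𝓝 0) := by
      have := (tendsto_add_atTop_iff_nat 1).2 ENNReal.tendsto_inv_nat_nhds_zero
      simpa using this
    refine tendsto_of_tendsto_of_tendsto_of_le_of_le tendsto_const_nhds h0
      (fun _ => zero_le) fun n => ?_
    have h := hgood (PiNat.res x n)
    rw [PiNat.res_length] at h
    change Metric.ediam (A (PiNat.res x (n + 1))) ≤ _
    rw [PiNat.res_succ]
    cases x n
    · exact h.dW
    · exact h.dV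
  have halive : ∀ n, ∃ y, ∀ U ∈ (S n).1, y ∈ f '' U := by
    intro n
    obtain ⟨y, hy⟩ := (S n).2.2.2 univ MeasurableSet.univ ⟨∅, by simp, by simp, by simp⟩
    exact ⟨y, fun U hU => by simpa using hy U hU⟩
  choose y hy using halive
  have hne : ∀ l, (A l).Nonempty := fun l => (hy _ _ (hAS l)).imp fun _ h => h.1
  have hdom := hanti.map_of_vanishingDiam hdiam hne
  let φ : (ℕ → Bool) → Z := fun x => (CantorScheme.inducedMap A).2 ⟨x, hdom ▸ mem_univ x⟩
  have hφinj : Function.Injective φ := by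
    intro x x' h
    exact congrArg Subtype.val (hdisj.map_injective h)
  have hφmem : ∀ x n, φ x ∈ A (PiNat.res x n) := fun x n => CantorScheme.map_mem _ n
  have hlim : ∀ x, Tendsto y atTop (𝓝 (f (φ x))) := by
    intro x
    have h1 : ∀ n, ∃ u ∈ A (PiNat.res x n), f u = y n := by
      intro n
      have := hAS (PiNat.res x n)
      rw [PiNat.res_length] at this
      exact hy n _ this
    choose u hu huy using h1
    have h2 : Tendsto u atTop (𝓝 (φ x)) := by
      rw [tendsto_iff_edist_tendsto_0]
      exact tendsto_of_tendsto_of_tendsto_of_le_of_le tendsto_const_nhds (hdiam x)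
        (fun _ => zero_le) fun n => Metric.edist_le_ediam_of_mem (hu n) (hφmem x n)
    have h3 := (hf.tendsto (φ x)).comp h2
    refine h3.congr fun n => huy n
  have hcount : (range φ).Countable := by
    refine (hc (f (φ fun _ => true))).mono ?_
    rintro _ ⟨x, rfl⟩
    exact tendsto_nhds_unique (hlim x) (hlim _)
  have : Countable (ℕ → Bool) := by
    have := hcount.to_subtype
    exact (rangeFactorization_injective.2 hφinj).countable
  obtain ⟨e, he⟩ := exists_surjective_nat (ℕ → Bool)
  obtain ⟨n, hn⟩ := he fun k => !(e k k)
  have h := congrFun hn n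
  simp at h

/-- The range of a continuous countable-to-one function on a Polish space is Borel. -/
lemma measurableSet_range {Z Y : Type*} [TopologicalSpace Z] [PolishSpace Z]
    [TopologicalSpace Y] [PolishSpace Y] [MeasurableSpace Y] [BorelSpace Y]
    {f : Z → Y} (hf : Continuous f) (hc : ∀ y, (f ⁻¹' {y}).Countable) :
    MeasurableSet (range f) := by
  let := TopologicalSpace.upgradeIsCompletelyMetrizable Z
  borelize Z
  obtain ⟨c, h1, h2, h3⟩ := small_univ hf hc
  have : range f = ⋃ t ∈ c, f '' t := by
    rw [← image_univ, ← univ_subset_iff.1 h3, sUnion_eq_biUnion, image_iUnion₂]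
  rw [this]
  exact MeasurableSet.biUnion h1 fun t ht =>
    (h2 t ht).1.image_of_measurable_injOn hf.measurable (h2 t ht).2

end LN

open MeasureTheory in
/-- Lusin: countable-to-one Borel images of Borel sets are Borel. -/
lemma LN.measurableSet_image {X Y : Type*} [MeasurableSpace X] [StandardBorelSpace X]
    [TopologicalSpace Y] [PolishSpace Y] [MeasurableSpace Y] [BorelSpace Y]
    {g : X → Y} (hg : Measurable g) {B : Set X} (hB : MeasurableSet B)
    (hc : ∀ y, (B ∩ g ⁻¹' {y}).Countable) : MeasurableSet (g '' B) := by
  have := hB.standardBorel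
  let f : B → Y := fun x => g x
  have hf : Measurable f := hg.comp measurable_subtype_coe
  have hfc : ∀ y, (f ⁻¹' {y}).Countable := by
    intro y
    have : f ⁻¹' {y} = Subtype.val ⁻¹' (B ∩ g ⁻¹' {y}) := by
      ext x; simp [f]
    rw [this]
    exact (hc y).preimage Subtype.val_injective
  have hr : g '' B = range f := by
    ext y; simp [f]
  rw [hr]
  obtain ⟨t, ht1, ht2⟩ := (inferInstance : StandardBorelSpace B).polish
  obtain ⟨t', -, hcont, hpol⟩ := hf.exists_continuous (t := t)
  exact @LN.measurableSet_range B Y t' hpol _ _ _ _ f hcont hfc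

/-- If tail equivalence of a Borel `T` has countable classes on a Borel
set `B`, then `A = ⋃ n, T^n(B)` is a Borel `T`-stable set containing `B` on which
tail equivalence still has countable classes. -/
theorem statement11 {X : Type*} [TopologicalSpace X] [PolishSpace X]
    [MeasurableSpace X] [BorelSpace X]
    (T : X → X) (hT : Measurable T) (B : Set X) (hB : MeasurableSet B)
    (hcount : ∀ x ∈ B, {y ∈ B | ∃ m n : ℕ, T^[m] x = T^[n] y}.Countable) :
    MeasurableSet (⋃ n : ℕ, T^[n] '' B) ∧
    B ⊆ ⋃ n : ℕ, T^[n] '' B ∧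
    (∀ x ∈ ⋃ n : ℕ, T^[n] '' B, T x ∈ ⋃ n : ℕ, T^[n] '' B) ∧
    ∀ x ∈ ⋃ n : ℕ, T^[n] '' B,
      {y ∈ ⋃ n : ℕ, T^[n] '' B | ∃ m n : ℕ, T^[m] x = T^[n] y}.Countable := by
  refine ⟨MeasurableSet.iUnion fun n => ?_, ?_, ?_, ?_⟩
  · refine LN.measurableSet_image (hT.iterate n) hB fun y => ?_
    rcases (B ∩ T^[n] ⁻¹' {y}).eq_empty_or_nonempty with h | ⟨x, hxB, hx⟩
    · rw [h]; exact countable_empty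
    · refine (hcount x hxB).mono ?_
      rintro z ⟨hzB, hz⟩
      exact ⟨hzB, n, n, hx.trans hz.symm⟩
  · intro x hx
    exact mem_iUnion.2 ⟨0, x, hx, rfl⟩
  · intro x hx
    obtain ⟨n, b, hb, rfl⟩ := mem_iUnion.1 hx
    exact mem_iUnion.2 ⟨n + 1, b, hb, Function.iterate_succ_apply' T n b⟩
  · intro x hx
    obtain ⟨j, b, hb, rfl⟩ := mem_iUnion.1 hx
    refine (countable_iUnion fun k : ℕ => (hcount b hb).image (T^[k])).mono ?_
    rintro y ⟨hy, m, n, hmn⟩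
    obtain ⟨k, c, hc, rfl⟩ := mem_iUnion.1 hy
    refine mem_iUnion.2 ⟨k, c, ⟨hc, m + j, n + k, ?_⟩, rfl⟩
    rw [Function.iterate_add_apply, Function.iterate_add_apply, hmn]
end

section
/- Suppose X and Y are Polish spaces, E is a Borel equivalence relation on X, F is an equivalence relation on a subset of Y with all classes countable, and π : X → Y is a Borel reduction of E to F. Then there is an equivalence relation F' on all of Y, Borel as a subset of Y × Y and with all classes countable, such that π is also a reduction of E to F'. -/
open Set

namespace CountableReduction

open TopologicalSpace MeasureTheory

/-- A family of sets is small if its images are covered by Borel sets such that over every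
point at least one of the covering sets has countable section. -/
def Small {P Y Z I : Type*} [MeasurableSpace Y] [MeasurableSpace Z] (f : P → Y × Z)
    (W : I → Set P) : Prop :=
  ∃ B : I → Set (Y × Z), (∀ i, MeasurableSet (B i)) ∧ (∀ i, f '' W i ⊆ B i) ∧
    ∀ y, ∃ i, {z | (y, z) ∈ B i}.Countable

/-- Pairs of basic open sets with disjoint closures. -/
def SepPair (Z : Type*) [TopologicalSpace Z] [SecondCountableTopology Z] : Type _ :=
  {p : countableBasis Z × countableBasis Z //
    Disjoint (closure (p.1 : Set Z)) (closure (p.2 : Set Z))}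

instance (Z : Type*) [TopologicalSpace Z] [SecondCountableTopology Z] :
    Countable (SepPair Z) := by
  have : Countable (countableBasis Z) := (countable_countableBasis Z).to_subtype
  unfold SepPair
  infer_instance

/-- The two closed sets of a pair. -/
def SepPair.C {Z : Type*} [TopologicalSpace Z] [SecondCountableTopology Z] (k : SepPair Z)
    (b : Bool) : Set Z :=
  if b then closure (k.1.1 : Set Z) else closure (k.1.2 : Set Z)

lemma SepPair.isClosed {Z : Type*} [TopologicalSpace Z] [SecondCountableTopology Z]
    (k : SepPair Z) (b : Bool) : IsClosed (k.C b) := by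
  unfold SepPair.C
  split_ifs <;> exact isClosed_closure

lemma SepPair.eq_of_mem {Z : Type*} [TopologicalSpace Z] [SecondCountableTopology Z]
    (k : SepPair Z) (b c : Bool) (z : Z) (hb : z ∈ k.C b) (hc : z ∈ k.C c) : b = c := by
  have h : z ∈ closure (k.1.1 : Set Z) → z ∉ closure (k.1.2 : Set Z) :=
    fun h1 => Set.disjoint_left.1 k.2 h1
  cases b <;> cases c <;> simp_all [SepPair.C]

lemma exists_sepPair {Z : Type*} [TopologicalSpace Z] [SecondCountableTopology Z] [T25Space Z]
    (S : Set Z) (hS : ¬ S.Countable) :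
    ∃ k : SepPair Z, ∀ b, ¬ (S ∩ k.C b).Countable := by
  set bad : Set Z := ⋃ b ∈ {b ∈ countableBasis Z | (S ∩ b).Countable}, S ∩ b with hbad
  have hbc : bad.Countable :=
    ((countable_countableBasis Z).mono (fun b hb => hb.1)).biUnion (fun b hb => hb.2)
  have hns : ¬ (S \ bad).Countable := fun h =>
    hS ((h.union hbc).mono (fun z hz => by
      by_cases hzb : z ∈ bad
      · exact Or.inr hzb
      · exact Or.inl ⟨hz, hzb⟩))
  have hnt : (S \ bad).Nontrivial := by
    by_contra h
    exact hns (Set.not_nontrivial_iff.1 h).countable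
  obtain ⟨z, hz, z', hz', hne⟩ := hnt
  obtain ⟨u, hzu, huo, v, hzv, hvo, huv⟩ := exists_open_nhds_disjoint_closure hne
  obtain ⟨b, hb, hzb, hbu⟩ := (isBasis_countableBasis Z).exists_subset_of_mem_open hzu huo
  obtain ⟨c, hc, hzc, hcv⟩ := (isBasis_countableBasis Z).exists_subset_of_mem_open hzv hvo
  have key : ∀ w ∈ S \ bad, ∀ d ∈ countableBasis Z, w ∈ d → ¬ (S ∩ closure d).Countable := by
    intro w hw d hd hwd hcount
    apply hw.2
    rw [hbad]
    exact Set.mem_biUnion (x := d)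
      ⟨hd, hcount.mono (Set.inter_subset_inter_right _ subset_closure)⟩ ⟨hw.1, hwd⟩
  refine ⟨⟨(⟨b, hb⟩, ⟨c, hc⟩), huv.mono (closure_mono hbu) (closure_mono hcv)⟩, ?_⟩
  intro β
  cases β
  · simpa [SepPair.C] using key z' hz' c hc hzc
  · simpa [SepPair.C] using key z hz b hb hzb

section

variable {P Y Z I J : Type*} [MeasurableSpace Y] [MeasurableSpace Z]

lemma split [TopologicalSpace Z] [SecondCountableTopology Z] [T25Space Z] [BorelSpace Z]
    [Finite I] [Countable J] (f : P → Y × Z) (W : I → Set P) (hW : ¬ Small f W)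
    (p : J → I) (β : J → Bool) :
    ∃ k : I → SepPair Z,
      ¬ Small f (fun j => W (p j) ∩ {x | (f x).2 ∈ (k (p j)).C (β j)}) := by
  by_contra! h
  choose B hBm hBs hBc using h
  apply hW
  refine ⟨fun i => ⋂ k : I → SepPair Z, ⋂ j : J, ⋂ _ : p j = i,
    ({q : Y × Z | q.2 ∈ (k (p j)).C (β j)}ᶜ ∪ B k j), ?_, ?_, ?_⟩
  · intro i
    refine MeasurableSet.iInter fun k => MeasurableSet.iInter fun j =>
      MeasurableSet.iInter fun _ => ?_
    exact (measurable_snd ((k (p j)).isClosed (β j)).measurableSet).compl.union (hBm k j)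
  · rintro i _ ⟨x, hx, rfl⟩
    simp only [Set.mem_iInter]
    rintro k j rfl
    by_cases hc : (f x).2 ∈ (k (p j)).C (β j)
    · exact Or.inr (hBs k j ⟨x, ⟨hx, hc⟩, rfl⟩)
    · exact Or.inl hc
  · intro y
    by_contra! hy
    choose k hk using fun i => exists_sepPair _ (hy i)
    obtain ⟨j, hj⟩ := hBc k y
    apply hk (p j) (β j)
    refine hj.mono ?_
    rintro z ⟨hz, hzC⟩
    simp only [Set.mem_iInter, Set.mem_ofPred_eq] at hz
    rcases hz k j rfl with h | h
    · exact absurd hzC h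
    · exact h

lemma refine_small [Finite I] (f : P → Y × Z) (W : I → Set P) (hW : ¬ Small f W)
    (D : ℕ → Set P) (hD : ∀ x, ∃ m, x ∈ D m) :
    ∃ m : I → ℕ, ¬ Small f (fun i => W i ∩ D (m i)) := by
  by_contra! h
  choose B hBm hBs hBc using h
  apply hW
  refine ⟨fun i => ⋃ n : ℕ, ⋂ m : I → ℕ, ⋂ _ : m i = n, B m i, ?_, ?_, ?_⟩
  · intro i
    exact MeasurableSet.iUnion fun n => MeasurableSet.iInter fun m =>
      MeasurableSet.iInter fun _ => hBm m i
  · rintro i _ ⟨x, hx, rfl⟩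
    obtain ⟨n, hn⟩ := hD x
    simp only [Set.mem_iUnion, Set.mem_iInter]
    refine ⟨n, fun m hm => hBs m i ⟨x, ⟨hx, ?_⟩, rfl⟩⟩
    rw [hm]; exact hn
  · intro y
    by_contra! hy
    have : ∀ i, ∃ n : ℕ, ¬ {z | (y, z) ∈ ⋂ m : I → ℕ, ⋂ _ : m i = n, B m i}.Countable := by
      intro i
      by_contra! hc
      apply hy i
      refine (Set.countable_iUnion hc).mono ?_
      intro z hz
      obtain ⟨n, hn⟩ := Set.mem_iUnion.1 hz
      exact Set.mem_iUnion.2 ⟨n, hn⟩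
    choose m hm using this
    obtain ⟨j, hj⟩ := hBc m y
    apply hm j
    refine hj.mono ?_
    intro z hz
    simp only [Set.mem_iInter, Set.mem_ofPred_eq] at hz
    exact hz m rfl

/-- One step of the construction. -/
lemma step [MetricSpace P] [SeparableSpace P] [Nonempty P]
    [TopologicalSpace Y] [TopologicalSpace Z] [SecondCountableTopology Z] [T25Space Z]
    [BorelSpace Z] (f : P → Y × Z) (hf : Continuous f) (n : ℕ)
    (W : (Fin n → Bool) → Set P) (hW : ¬ Small f W) (hc : ∀ t, IsClosed (W t)) :
    ∃ W' : (Fin (n + 1) → Bool) → Set P, ¬ Small f W' ∧ (∀ t, IsClosed (W' t)) ∧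
      (∀ t, W' t ⊆ W (Fin.init t)) ∧
      (∀ t, ∃ x, W' t ⊆ Metric.closedBall x (1 / (n + 1 : ℝ))) ∧
      ∀ t t', Fin.init t = Fin.init t' → ∀ x ∈ W' t, ∀ x' ∈ W' t', (f x).2 = (f x').2 →
        t (Fin.last n) = t' (Fin.last n) := by
  obtain ⟨k, hk⟩ := split f W hW (fun t : Fin (n + 1) → Bool => (Fin.init t : Fin n → Bool))
    (fun t => t (Fin.last n))
  obtain ⟨m, hm⟩ := refine_small f _ hk
    (fun m => Metric.closedBall (denseSeq P m) (1 / (n + 1 : ℝ))) (by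
      intro x
      have hpos : (0 : ℝ) < 1 / (n + 1 : ℝ) := by positivity
      obtain ⟨m, hm⟩ := (denseRange_denseSeq P).exists_dist_lt x hpos
      exact ⟨m, hm.le⟩)
  refine ⟨_, hm, ?_, ?_, ?_, ?_⟩
  · intro t
    refine ((hc _).inter ?_).inter Metric.isClosed_closedBall
    exact ((k _).isClosed _).preimage (continuous_snd.comp hf)
  · intro t x hx
    exact hx.1.1
  · intro t
    exact ⟨_, Set.inter_subset_right⟩
  · intro t t' htt x hx x' hx' hxx
    have h1 := hx.1.2
    have h2 := hx'.1.2
    simp only [Set.mem_ofPred_eq] at h1 h2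
    rw [← hxx, ← htt] at h2
    exact SepPair.eq_of_mem _ _ _ _ h1 h2

lemma Small.of_empty (f : P → Y × Z) (W : I → Set P) (i : I) (hi : W i = ∅) : Small f W := by
  classical
  refine ⟨fun j => if j = i then ∅ else univ, ?_, ?_, ?_⟩
  · intro j; dsimp only; split_ifs <;> simp
  · intro j; dsimp only; split_ifs with h
    · subst h; simp [hi]
    · simp
  · intro y; exact ⟨i, by simp⟩

end

theorem key_aux {P Y Z : Type*} [MetricSpace P] [CompleteSpace P] [SeparableSpace P] [Nonempty P]
    [TopologicalSpace Y] [T2Space Y] [MeasurableSpace Y] [BorelSpace Y]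
    [TopologicalSpace Z] [SecondCountableTopology Z] [T25Space Z]
    [MeasurableSpace Z] [BorelSpace Z] (f : P → Y × Z) (hf : Continuous f)
    (hcount : ∀ y, {z | (y, z) ∈ range f}.Countable) :
    ∃ B : Set (Y × Z), MeasurableSet B ∧ range f ⊆ B ∧ ∀ y, {z | (y, z) ∈ B}.Countable := by
  classical
  by_contra hno
  have h0 : ¬ Small f (fun _ : Fin 0 → Bool => (univ : Set P)) := by
    rintro ⟨B, hBm, hBs, hBc⟩
    refine hno ⟨B default, hBm _, ?_, ?_⟩
    · simpa using hBs default
    · intro y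
      obtain ⟨i, hi⟩ := hBc y
      rwa [Subsingleton.elim i default] at hi
  choose! nxt n1 n2 n3 n4 n5 using step f hf
  let W : (n : ℕ) → (Fin n → Bool) → Set P := fun n =>
    Nat.rec (motive := fun n => (Fin n → Bool) → Set P) (fun _ => univ) (fun n W => nxt n W) n
  have hWs : ∀ n, W (n + 1) = nxt n (W n) := fun n => rfl
  have hW : ∀ n, ¬ Small f (W n) ∧ ∀ t, IsClosed (W n t) := by
    intro n
    induction n with
    | zero => exact ⟨h0, fun _ => isClosed_univ⟩
    | succ n ih => rw [hWs]; exact ⟨n1 n _ ih.1 ih.2, n2 n _ ih.1 ih.2⟩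
  let r : (ℕ → Bool) → (n : ℕ) → (Fin n → Bool) := fun α n i => α i
  have hr : ∀ α n, (Fin.init (r α (n + 1)) : Fin n → Bool) = r α n := fun α n => rfl
  have hsub : ∀ α n, W (n + 1) (r α (n + 1)) ⊆ W n (r α n) := fun α n =>
    n3 n _ (hW n).1 (hW n).2 (r α (n + 1))
  have hball : ∀ α n, ∃ x, W (n + 1) (r α (n + 1)) ⊆ Metric.closedBall x (1 / (n + 1 : ℝ)) :=
    fun α n => n4 n _ (hW n).1 (hW n).2 (r α (n + 1))
  have hne : ∀ n t, (W n t).Nonempty := by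
    intro n t
    by_contra h
    exact (hW n).1 (Small.of_empty f _ t (Set.not_nonempty_iff_eq_empty.1 h))
  have hx : ∀ α, ∃ x, ∀ n, x ∈ W n (r α n) := by
    intro α
    have hanti : Antitone (fun n => W n (r α n)) := antitone_nat_of_succ_le (hsub α)
    choose pt hpt using fun n => hne n (r α n)
    have hlim : Filter.Tendsto (fun n : ℕ => 2 * (1 / (n + 1 : ℝ))) Filter.atTop (nhds 0) := by
      simpa using tendsto_one_div_add_atTop_nhds_zero_nat (𝕜 := ℝ).const_mul 2
    have hcs : CauchySeq (fun n => pt (n + 1)) := by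
      refine cauchySeq_of_le_tendsto_0 _ ?_ hlim
      intro a b N ha hb
      obtain ⟨x, hx⟩ := hball α N
      have h1 := hx (hanti (Nat.succ_le_succ ha) (hpt (a + 1)))
      have h2 := hx (hanti (Nat.succ_le_succ hb) (hpt (b + 1)))
      rw [Metric.mem_closedBall] at h1 h2
      have := dist_triangle_right (pt (a + 1)) (pt (b + 1)) x
      linarith
    obtain ⟨x, hx⟩ := cauchySeq_tendsto_of_complete hcs
    refine ⟨x, fun n => ((hW n).2 _).mem_of_tendsto hx ?_⟩
    filter_upwards [Filter.eventually_ge_atTop n] with a ha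
    exact hanti (ha.trans (Nat.le_succ a)) (hpt (a + 1))
  choose x hx using hx
  -- small neighbourhoods
  have hsmall : ∀ α, ∀ U ∈ nhds (x α), ∃ N, ∀ n ≥ N, W n (r α n) ⊆ U := by
    intro α U hU
    obtain ⟨ε, hε, hεU⟩ := Metric.mem_nhds_iff.1 hU
    obtain ⟨N, hN⟩ := exists_nat_one_div_lt (half_pos hε)
    have hanti : Antitone (fun n => W n (r α n)) := antitone_nat_of_succ_le (hsub α)
    refine ⟨N + 1, fun n hn w hw => hεU ?_⟩
    obtain ⟨c, hc⟩ := hball α N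
    have h1 := hc (hanti hn hw)
    have h2 := hc (hx α (N + 1))
    rw [Metric.mem_closedBall] at h1 h2
    have := dist_triangle_right w (x α) c
    rw [Metric.mem_ball]
    linarith
  have hfst : ∀ α β, (f (x α)).1 = (f (x β)).1 := by
    intro α β
    by_contra hne'
    obtain ⟨U, V, hU, hV, hxU, hxV, hUV⟩ := t2_separation hne'
    have hf1 : Continuous fun p => (f p).1 := continuous_fst.comp hf
    obtain ⟨N, hN⟩ := hsmall α _ (hf1.continuousAt.preimage_mem_nhds (hU.mem_nhds hxU))
    obtain ⟨M, hM⟩ := hsmall β _ (hf1.continuousAt.preimage_mem_nhds (hV.mem_nhds hxV))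
    have hN' := hN (max N M) (le_max_left _ _)
    have hM' := hM (max N M) (le_max_right _ _)
    apply (hW (max N M)).1
    refine ⟨fun t => (if t = r α (max N M) then Prod.fst ⁻¹' U else univ) ∩
      (if t = r β (max N M) then Prod.fst ⁻¹' V else univ), ?_, ?_, ?_⟩
    · intro t
      refine MeasurableSet.inter ?_ ?_
      · split_ifs
        · exact measurable_fst hU.measurableSet
        · exact MeasurableSet.univ
      · split_ifs
        · exact measurable_fst hV.measurableSet
        · exact MeasurableSet.univ
    · rintro t _ ⟨w, hw, rfl⟩
      constructor
      · split_ifs with h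
        · subst h; exact hN' hw
        · trivial
      · split_ifs with h
        · subst h; exact hM' hw
        · trivial
    · intro y
      by_cases hy : y ∈ U
      · refine ⟨r β (max N M), ?_⟩
        have hyV : y ∉ V := Set.disjoint_left.1 hUV hy
        convert Set.countable_empty
        ext z
        simp [hyV]
      · refine ⟨r α (max N M), ?_⟩
        convert Set.countable_empty
        ext z
        simp [hy]
  have hinj : Function.Injective fun α => (f (x α)).2 := by
    intro α β hαβ
    have : ∀ n, r α n = r β n := by
      intro n
      induction n with
      | zero => exact Subsingleton.elim _ _
      | succ n ih =>
        have hl := n5 n _ (hW n).1 (hW n).2 (r α (n + 1)) (r β (n + 1)) ih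
          (x α) (hx α (n + 1)) (x β) (hx β (n + 1)) hαβ
        funext i
        refine Fin.lastCases hl (fun j => ?_) i
        exact congrFun ih j
    funext n
    exact congrFun (this (n + 1)) (Fin.last n)
  have hc := hcount (f (x fun _ => false)).1
  have hc2 : (range fun α => (f (x α)).2).Countable := by
    refine hc.mono ?_
    rintro _ ⟨α, rfl⟩
    refine ⟨x α, ?_⟩
    rw [hfst (fun _ => false) α]
  have hc3 : Countable (ℕ → Bool) := by
    have := hc2.to_subtype
    exact (Set.rangeFactorization_injective.2 hinj).countable
  obtain ⟨g, hg⟩ := exists_surjective_nat (ℕ → Bool)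
  obtain ⟨n, hn⟩ := hg (fun n => !(g n n))
  have := congrFun hn n
  simp at this

theorem key {Y Z : Type*}
    [TopologicalSpace Y] [T2Space Y] [MeasurableSpace Y] [BorelSpace Y]
    [TopologicalSpace Z] [SecondCountableTopology Z] [T25Space Z]
    [MeasurableSpace Z] [BorelSpace Z] (R : Set (Y × Z)) (hR : AnalyticSet R)
    (hcount : ∀ y, {z | (y, z) ∈ R}.Countable) :
    ∃ B : Set (Y × Z), MeasurableSet B ∧ R ⊆ B ∧ ∀ y, {z | (y, z) ∈ B}.Countable := by
  rw [AnalyticSet] at hR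
  rcases hR with rfl | ⟨f, hf, rfl⟩
  · exact ⟨∅, MeasurableSet.empty, subset_rfl, hcount⟩
  · letI := upgradeIsCompletelyMetrizable (ℕ → ℕ)
    exact key_aux f hf hcount

/-- Separation of the range of a Borel map from a Borel image. -/
lemma sep_image {X Y Q : Type*} [TopologicalSpace X] [PolishSpace X]
    [MeasurableSpace X] [BorelSpace X]
    [TopologicalSpace Y] [PolishSpace Y] [MeasurableSpace Y] [BorelSpace Y]
    [MeasurableSpace Q] [StandardBorelSpace Q]
    (π : X → Y) (hπ : Measurable π) (g : Q → Y) (hg : Measurable g) (M : Set Q)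
    (hM : MeasurableSet M) (h : ∀ q ∈ M, ∀ x, g q ≠ π x) :
    ∃ B : Set Y, MeasurableSet B ∧ (∀ x, π x ∈ B) ∧ ∀ q ∈ M, g q ∉ B := by
  have hA : AnalyticSet (π '' univ) := MeasurableSet.univ.analyticSet_image hπ
  have hD : AnalyticSet (g '' M) := hM.analyticSet_image hg
  obtain ⟨B, h1, h2, h3⟩ := hA.measurablySeparable hD (by
    rw [Set.disjoint_left]
    rintro _ ⟨x, -, rfl⟩ ⟨q, hq, hqx⟩
    exact h q hq x hqx)
  exact ⟨B, h3, fun x => h1 ⟨x, trivial, rfl⟩, fun q hq hB =>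
    Set.disjoint_left.1 h2 ⟨q, hq, rfl⟩ hB⟩

end CountableReduction

open CountableReduction MeasureTheory

/-- If `π` is a Borel reduction of a Borel equivalence relation `E` on
`X` to a countable (partial) equivalence relation `F` on a subset of `Y`, then there
is a countable Borel equivalence relation `F'` on all of `Y` such that `π` is also a
reduction of `E` to `F'`. -/
theorem statement14 {X Y : Type*} [TopologicalSpace X] [PolishSpace X]
    [MeasurableSpace X] [BorelSpace X]
    [TopologicalSpace Y] [PolishSpace Y] [MeasurableSpace Y] [BorelSpace Y]
    (E : X → X → Prop) (hE : Equivalence E)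
    (hEBorel : MeasurableSet {p : X × X | E p.1 p.2})
    (F : Y → Y → Prop) (hFsym : ∀ y z, F y z → F z y)
    (hFtrans : ∀ y z w, F y z → F z w → F y w)
    (hFcount : ∀ y : Y, {z : Y | F y z}.Countable)
    (π : X → Y) (hπ : Measurable π)
    (hred : ∀ x x', E x x' ↔ F (π x) (π x')) :
    ∃ F' : Y → Y → Prop, Equivalence F' ∧
      MeasurableSet {p : Y × Y | F' p.1 p.2} ∧
      (∀ y : Y, {z : Y | F' y z}.Countable) ∧
      ∀ x x', E x x' ↔ F' (π x) (π x') := by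
  have hππ : Measurable (Prod.map π π) := hπ.prodMap hπ
  have hR := hEBorel.analyticSet_image hππ
  have hS := hEBorel.compl.analyticSet_image hππ
  have hRF : ∀ q ∈ Prod.map π π '' {p : X × X | E p.1 p.2}, F q.1 q.2 := by
    rintro _ ⟨p, hp, rfl⟩
    exact (hred _ _).1 hp
  obtain ⟨R', hR'm, hRR', hR'c⟩ := key _ hR (fun y => (hFcount y).mono fun z hz => hRF _ hz)
  obtain ⟨T0, hRT0, hT0S, hT0m⟩ := hR.measurablySeparable hS (by
    rw [Set.disjoint_left]
    rintro q hq ⟨p, hp, rfl⟩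
    exact hp ((hred _ _).2 (hRF _ hq)))
  -- the symmetric relation
  obtain ⟨T, hTm, hTsym, hTE, hTc⟩ : ∃ T : Set (Y × Y), MeasurableSet T ∧
      (∀ y z, (y, z) ∈ T → (z, y) ∈ T) ∧ (∀ x x', (π x, π x') ∈ T ↔ E x x') ∧
      ∀ y, {z | (y, z) ∈ T}.Countable := by
    refine ⟨(T0 ∩ R') ∩ Prod.swap ⁻¹' (T0 ∩ R'), ?_, ?_, ?_, ?_⟩
    · exact (hT0m.inter hR'm).inter (measurable_swap (hT0m.inter hR'm))
    · intro y z h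
      exact ⟨h.2, h.1⟩
    · intro x x'
      constructor
      · intro h
        by_contra hn
        exact Set.disjoint_left.1 hT0S ⟨(x, x'), hn, rfl⟩ h.1.1
      · intro h
        have h1 : (π x, π x') ∈ Prod.map π π '' {p : X × X | E p.1 p.2} := ⟨(x, x'), h, rfl⟩
        have h2 : (π x', π x) ∈ Prod.map π π '' {p : X × X | E p.1 p.2} :=
          ⟨(x', x), hE.symm h, rfl⟩
        exact ⟨⟨hRT0 h1, hRR' h1⟩, ⟨hRT0 h2, hRR' h2⟩⟩
    · intro y
      exact (hR'c y).mono fun z hz => hz.1.2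
  have hB0m : MeasurableSet {y | (y, y) ∈ T} := (measurable_id.prodMk measurable_id) hTm
  obtain ⟨B1, hB1m, hB1A, hB1⟩ := sep_image π hπ (fun q : Y × X × X => q.1) measurable_fst
    {q | ((q.1, π q.2.1) ∈ T ∧ (π q.2.1, π q.2.2) ∈ T) ∧ (q.1, π q.2.2) ∉ T}
    (by
      refine MeasurableSet.inter (MeasurableSet.inter ?_ ?_) (MeasurableSet.compl ?_)
      · exact (by fun_prop : Measurable fun q : Y × X × X => (q.1, π q.2.1)) hTm
      · exact (by fun_prop : Measurable fun q : Y × X × X => (π q.2.1, π q.2.2)) hTm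
      · exact (by fun_prop : Measurable fun q : Y × X × X => (q.1, π q.2.2)) hTm)
    (by
      rintro ⟨y, x1, x2⟩ ⟨⟨h1, h2⟩, h3⟩ x hx
      dsimp only at h1 h2 h3 hx
      subst hx
      rw [hTE] at h1 h2 h3
      exact h3 (hE.trans h1 h2))
  obtain ⟨B2, hB2m, hB2A, hB2⟩ := sep_image π hπ (fun q : Y × Y × X => q.2.1)
    (by fun_prop)
    {q | (((q.1, q.2.1) ∈ T ∧ (q.2.1, π q.2.2) ∈ T) ∧ (q.1, π q.2.2) ∉ T) ∧ q.1 ∈ B1}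
    (by
      refine MeasurableSet.inter (MeasurableSet.inter (MeasurableSet.inter ?_ ?_)
        (MeasurableSet.compl ?_)) (measurable_fst hB1m)
      · exact (by fun_prop : Measurable fun q : Y × Y × X => (q.1, q.2.1)) hTm
      · exact (by fun_prop : Measurable fun q : Y × Y × X => (q.2.1, π q.2.2)) hTm
      · exact (by fun_prop : Measurable fun q : Y × Y × X => (q.1, π q.2.2)) hTm)
    (by
      rintro ⟨y, z, x2⟩ ⟨⟨⟨h1, h2⟩, h3⟩, h4⟩ x hx
      dsimp only at h1 h2 h3 h4 hx
      subst hx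
      exact hB1 (y, x, x2) ⟨⟨h1, h2⟩, h3⟩ h4)
  obtain ⟨B3, hB3m, hB3A, hB3⟩ := sep_image π hπ (fun q : Y × Y × Y => q.2.2)
    (by fun_prop)
    {q | ((((q.1, q.2.1) ∈ T ∧ (q.2.1, q.2.2) ∈ T) ∧ (q.1, q.2.2) ∉ T) ∧ q.1 ∈ B1) ∧ q.2.1 ∈ B2}
    (by
      refine MeasurableSet.inter (MeasurableSet.inter (MeasurableSet.inter
        (MeasurableSet.inter ?_ ?_) (MeasurableSet.compl ?_)) (measurable_fst hB1m)) ?_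
      · exact (by fun_prop : Measurable fun q : Y × Y × Y => (q.1, q.2.1)) hTm
      · exact (by fun_prop : Measurable fun q : Y × Y × Y => (q.2.1, q.2.2)) hTm
      · exact (by fun_prop : Measurable fun q : Y × Y × Y => (q.1, q.2.2)) hTm
      · exact (by fun_prop : Measurable fun q : Y × Y × Y => q.2.1) hB2m)
    (by
      rintro ⟨y, z, w⟩ ⟨⟨⟨⟨h1, h2⟩, h3⟩, h4⟩, h5⟩ x hx
      dsimp only at h1 h2 h3 h4 h5 hx
      subst hx
      exact hB2 (y, z, x) ⟨⟨⟨h1, h2⟩, h3⟩, h4⟩ h5)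
  obtain ⟨B, hBm, hBA, hBtrans⟩ : ∃ B : Set Y, MeasurableSet B ∧ (∀ x, π x ∈ B) ∧
      ∀ y ∈ B, ∀ z ∈ B, ∀ w ∈ B, (y, z) ∈ T → (z, w) ∈ T → (y, w) ∈ T := by
    refine ⟨(B1 ∩ B2) ∩ B3, (hB1m.inter hB2m).inter hB3m,
      fun x => ⟨⟨hB1A x, hB2A x⟩, hB3A x⟩, ?_⟩
    intro y hy z hz w hw h1 h2
    by_contra h3
    exact hB3 (y, z, w) ⟨⟨⟨⟨h1, h2⟩, h3⟩, hy.1.1⟩, hz.1.2⟩ hw.2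
  refine ⟨fun y z => y = z ∨ (((y, z) ∈ T ∧ y ∈ B) ∧ z ∈ B), ⟨fun y => Or.inl rfl, ?_, ?_⟩,
    ?_, ?_, ?_⟩
  · rintro y z (rfl | ⟨⟨h1, h2⟩, h3⟩)
    · exact Or.inl rfl
    · exact Or.inr ⟨⟨hTsym _ _ h1, h3⟩, h2⟩
  · rintro y z w (rfl | ⟨⟨h1, h2⟩, h3⟩) (rfl | ⟨⟨h4, h5⟩, h6⟩)
    · exact Or.inl rfl
    · exact Or.inr ⟨⟨h4, h5⟩, h6⟩
    · exact Or.inr ⟨⟨h1, h2⟩, h3⟩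
    · exact Or.inr ⟨⟨hBtrans y h2 z h3 w h6 h1 h4, h2⟩, h6⟩
  · exact (measurableSet_eq_fun measurable_fst measurable_snd).union
      ((hTm.inter (measurable_fst hBm)).inter (measurable_snd hBm))
  · intro y
    refine ((Set.countable_singleton y).union (hTc y)).mono ?_
    rintro z (rfl | h)
    · exact Or.inl rfl
    · exact Or.inr h.1.1
  · intro x x'
    constructor
    · intro h
      exact Or.inr ⟨⟨(hTE _ _).2 h, hBA x⟩, hBA x'⟩
    · rintro (h | h)
      · have h1 := (hred x x).1 (hE.refl x)
        rw [hred, ← h]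
        exact h1
      · exact (hTE _ _).1 h.1.1
end

section
/- Let X be a Polish space and let E and F be Borel equivalence relations on X with E ⊆ F such that E has countable index in F (every F-class contains only countably many E-classes). If D is a smooth-like subequivalence relation situation as follows: suppose φ : X → X' is a Borel reduction of F to an equivalence relation F' with countable classes on a Polish space X', and let D = (φ × φ)⁻¹(equality on X'). Then D ∩ E is smooth, i.e., Borel reducible to the equality relation on a Polish space. -/
open Set

open MeasureTheory Filter Topology

namespace St15

/-- Neighbours of an analytic set along a Borel relation form an analytic set. -/
lemma analytic_nbr {X : Type*} [TopologicalSpace X] [PolishSpace X]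
    [MeasurableSpace X] [BorelSpace X] {G : Set (X × X)} (hG : MeasurableSet G)
    {A : Set X} (hA : AnalyticSet A) : AnalyticSet {y | ∃ x ∈ A, (x, y) ∈ G} := by
  have h1 : AnalyticSet (Prod.fst ⁻¹' A : Set (X × X)) := hA.preimage continuous_fst
  have h2 : AnalyticSet (⋂ b : Bool, cond b G (Prod.fst ⁻¹' A : Set (X × X))) := by
    apply AnalyticSet.iInter
    rintro (_ | _)
    · exact h1
    · exact hG.analyticSet
  have h3 := h2.image_of_continuous continuous_snd
  convert h3 using 1
  ext y
  simp only [mem_ofPred_eq, mem_image, mem_iInter, Bool.forall_bool, cond_true, cond_false,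
    mem_preimage, Prod.exists, exists_eq_right]

/-- Independent analytic sets are contained in independent Borel sets. -/
lemma indep_hull {X : Type*} [TopologicalSpace X] [PolishSpace X]
    [MeasurableSpace X] [BorelSpace X] {G : Set (X × X)} (hG : MeasurableSet G)
    {A : Set X} (hA : AnalyticSet A) (hi : ∀ x ∈ A, ∀ y ∈ A, (x, y) ∉ G) :
    ∃ B, A ⊆ B ∧ MeasurableSet B ∧ ∀ x ∈ B, ∀ y ∈ B, (x, y) ∉ G := by
  obtain ⟨U, hAU, hdU, hU⟩ := hA.measurablySeparable (analytic_nbr hG hA) (by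
    rw [Set.disjoint_left]
    rintro y hy ⟨x, hx, hxy⟩
    exact hi x hx y hy hxy)
  have hG' : MeasurableSet (Prod.swap ⁻¹' G) := measurable_swap hG
  obtain ⟨V, hAV, hdV, hV⟩ := hA.measurablySeparable (analytic_nbr hG' hU.analyticSet) (by
    rw [Set.disjoint_left]
    rintro x hx ⟨y, hy, hxy⟩
    exact Set.disjoint_left.1 hdU ⟨x, hx, hxy⟩ hy)
  refine ⟨U ∩ V, subset_inter hAU hAV, hU.inter hV, ?_⟩
  rintro x hx y hy hxy
  exact Set.disjoint_left.1 hdV ⟨y, hy.1, hxy⟩ hx.2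

/-- Invariant separation. -/
lemma inv_sep {X : Type*} [TopologicalSpace X] [PolishSpace X]
    [MeasurableSpace X] [BorelSpace X] {R : Set (X × X)} (hR : MeasurableSet R)
    {A B : Set X} (hA : AnalyticSet A) (hB : AnalyticSet B)
    (hinv : ∀ x y, (x, y) ∈ R → y ∈ B → x ∈ B) (hd : Disjoint A B) :
    ∃ U, A ⊆ U ∧ MeasurableSet U ∧ Disjoint U B ∧ ∀ x y, (x, y) ∈ R → x ∈ U → y ∈ U := by
  have step : ∀ U : {U : Set X // MeasurableSet U ∧ Disjoint U B},
      ∃ V : {U : Set X // MeasurableSet U ∧ Disjoint U B},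
        ∀ x y, (x, y) ∈ R → x ∈ U.1 → y ∈ V.1 := by
    rintro ⟨U, hU, hUB⟩
    obtain ⟨V, h1, h2, h3⟩ := (analytic_nbr hR hU.analyticSet).measurablySeparable hB (by
      rw [Set.disjoint_left]
      rintro y ⟨x, hx, hxy⟩ hy
      exact Set.disjoint_left.1 hUB hx (hinv x y hxy hy))
    exact ⟨⟨V, h3, h2.symm⟩, fun x y hxy hx => h1 ⟨x, hx, hxy⟩⟩
  choose N hN using step
  obtain ⟨U0, hAU, hdU, hU⟩ := hA.measurablySeparable hB hd
  let S : ℕ → {U : Set X // MeasurableSet U ∧ Disjoint U B} :=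
    fun n => Nat.rec ⟨U0, hU, hdU.symm⟩ (fun _ V => N V) n
  refine ⟨⋃ n, (S n).1, ?_, MeasurableSet.iUnion fun n => (S n).2.1, ?_, ?_⟩
  · exact hAU.trans (subset_iUnion (fun n => (S n).1) 0)
  · rw [Set.disjoint_iUnion_left]
    exact fun n => (S n).2.2
  · intro x y hxy hx
    obtain ⟨n, hn⟩ := mem_iUnion.1 hx
    exact mem_iUnion.2 ⟨n + 1, hN (S n) x y hxy hn⟩

/-- Finite configurations. -/
abbrev Cfg (n : ℕ) : Type :=
  ((Fin n → Bool) → ℕ → ℕ) × (Fin n → (Fin n → Bool) → ℕ → ℕ)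

/-- Finite approximations. -/
abbrev Apx (n : ℕ) : Type :=
  ((Fin n → Bool) → Fin n → ℕ) × (Fin n → (Fin n → Bool) → Fin n → ℕ)

/-- Restriction of a configuration. -/
def res {n : ℕ} (c : Cfg n) : Apx n := (fun u i => c.1 u i, fun k u i => c.2 k u i)

/-- Valid configurations. -/
def IsCfg {X X' : Type*} (s : ℕ → ℕ → Bool) (π : (ℕ → ℕ) → X) (f : (ℕ → ℕ) → X × X)
    (φ : X → X') (n : ℕ) (c : Cfg n) : Prop :=
  (∀ u v, φ (π (c.1 u)) = φ (π (c.1 v))) ∧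
  ∀ (k : Fin n) (u : Fin n → Bool), (∀ i : Fin n, i < k → u i = s k i) →
    f (c.2 k u) = (π (c.1 (Function.update u k false)), π (c.1 (Function.update u k true)))

lemma isClosed_cfg {X X' : Type*} [TopologicalSpace X] [T2Space X] [TopologicalSpace X']
    [T2Space X'] (s : ℕ → ℕ → Bool) {π : (ℕ → ℕ) → X} (hπ : Continuous π)
    {f : (ℕ → ℕ) → X × X} (hf : Continuous f)
    {φ : X → X'} (hφ : Continuous (φ ∘ π)) (n : ℕ) : IsClosed {c | IsCfg s π f φ n c} := by
  simp only [IsCfg, ofPred_and, ofPred_forall]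
  have ev : ∀ u, Continuous fun c : Cfg n => c.1 u := fun u => by fun_prop
  have ev2 : ∀ k u, Continuous fun c : Cfg n => c.2 k u := fun k u => by fun_prop
  refine IsClosed.inter ?_ ?_
  · exact isClosed_iInter fun u => isClosed_iInter fun v =>
      isClosed_eq (hφ.comp (ev u)) (hφ.comp (ev v))
  · exact isClosed_iInter fun k => isClosed_iInter fun u => isClosed_iInter fun _ =>
      isClosed_eq (hf.comp (ev2 k u)) ((hπ.comp (ev _)).prodMk (hπ.comp (ev _)))

lemma analytic_eval {X X' : Type*} [TopologicalSpace X] [PolishSpace X] [MeasurableSpace X]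
    [BorelSpace X] [TopologicalSpace X']
    [T2Space X'] (s : ℕ → ℕ → Bool) {π : (ℕ → ℕ) → X} (hπ : Continuous π)
    {f : (ℕ → ℕ) → X × X} (hf : Continuous f)
    {φ : X → X'} (hφ : Continuous (φ ∘ π)) (n : ℕ) {Y : Set X} (hY : MeasurableSet Y)
    (p : Apx n) (v : Fin n → Bool) :
    AnalyticSet ((fun c : Cfg n => π (c.1 v)) ''
      {c | IsCfg s π f φ n c ∧ (∀ u, π (c.1 u) ∈ Y) ∧ res c = p}) := by
  have ev : ∀ u, Continuous fun c : Cfg n => π (c.1 u) := fun u => hπ.comp (by fun_prop)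
  have hres : Continuous (res : Cfg n → Apx n) := by
    unfold res
    fun_prop
  borelize (Cfg n)
  apply AnalyticSet.image_of_continuous _ (ev v)
  apply MeasurableSet.analyticSet
  have h1 := (isClosed_cfg s hπ hf hφ n).measurableSet
  have h2 : MeasurableSet {c : Cfg n | ∀ u, π (c.1 u) ∈ Y} := by
    rw [ofPred_forall]
    exact MeasurableSet.iInter fun u => (ev u).measurable hY
  have h3 : MeasurableSet {c : Cfg n | res c = p} :=
    (isClosed_eq hres continuous_const).measurableSet
  exact h1.inter (h2.inter h3)

/-- Sets whose complement is a countable union of independent Borel sets. -/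
def Good {X : Type*} [MeasurableSpace X] (G : Set (X × X)) (Y : Set X) : Prop :=
  ∃ S : Set (Set X), S.Countable ∧
    (∀ C ∈ S, MeasurableSet C ∧ ∀ x ∈ C, ∀ y ∈ C, (x, y) ∉ G) ∧ Y = (⋃₀ S)ᶜ

lemma Good.meas {X : Type*} [MeasurableSpace X] {G : Set (X × X)} {Y : Set X}
    (h : Good G Y) : MeasurableSet Y := by
  obtain ⟨S, hS, h1, rfl⟩ := h
  exact (MeasurableSet.sUnion hS fun C hC => (h1 C hC).1).compl

lemma Good.iInter {X ι : Type*} [Countable ι] [MeasurableSpace X] {G : Set (X × X)}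
    {Y : ι → Set X} (h : ∀ i, Good G (Y i)) : Good G (⋂ i, Y i) := by
  choose S h1 h2 h3 using h
  refine ⟨⋃ i, S i, countable_iUnion h1, ?_, ?_⟩
  · intro C hC
    obtain ⟨i, hi⟩ := mem_iUnion.1 hC
    exact h2 i C hi
  · rw [sUnion_iUnion, compl_iUnion]
    exact iInter_congr h3

lemma Good.diff {X : Type*} [MeasurableSpace X] {G : Set (X × X)}
    {Y B : Set X} (h : Good G Y) (hB : MeasurableSet B)
    (hi : ∀ x ∈ B, ∀ y ∈ B, (x, y) ∉ G) : Good G (Y \ B) := by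
  obtain ⟨S, h1, h2, rfl⟩ := h
  refine ⟨insert B S, h1.insert B, ?_, ?_⟩
  · rintro C (rfl | hC)
    · exact ⟨hB, hi⟩
    · exact h2 C hC
  · rw [sUnion_insert, compl_union, inter_comm]
    rfl

lemma Good.univ {X : Type*} [MeasurableSpace X] (G : Set (X × X)) : Good G (univ : Set X) :=
  ⟨∅, countable_empty, by simp, by simp⟩

/-- The stable good set: every configuration in it can be extended. -/
lemma exists_stable {X X' : Type*} [TopologicalSpace X] [PolishSpace X] [MeasurableSpace X]
    [BorelSpace X] [TopologicalSpace X']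
    [T2Space X'] (s : ℕ → ℕ → Bool) {π : (ℕ → ℕ) → X} (hπ : Continuous π)
    {f : (ℕ → ℕ) → X × X} (hf : Continuous f)
    {φ : X → X'} (hφ : Continuous (φ ∘ π)) {G : Set (X × X)} (hG : MeasurableSet G)
    (hfG : range f = G) (hGφ : ∀ x y, (x, y) ∈ G → φ x = φ y) :
    ∃ Y, Good G Y ∧ ∀ n (c : Cfg n), IsCfg s π f φ n c → (∀ u, π (c.1 u) ∈ Y) →
      ∃ d : Cfg (n + 1), IsCfg s π f φ (n + 1) d ∧ (∀ u, π (d.1 u) ∈ Y) ∧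
        (∀ u, ∀ i < n, d.1 u i = c.1 (Fin.init u) i) ∧
        (∀ k u, ∀ i < n, d.2 (Fin.castSucc k) u i = c.2 k (Fin.init u) i) := by
  classical
  have key : ∀ p : (Σ n, Apx n), ∃ Y, Good G Y ∧
      ((∃ Z, Good G Z ∧ ¬ ∃ c, IsCfg s π f φ p.1 c ∧ (∀ u, π (c.1 u) ∈ Z) ∧ res c = p.2) →
        ¬ ∃ c, IsCfg s π f φ p.1 c ∧ (∀ u, π (c.1 u) ∈ Y) ∧ res c = p.2) := by
    intro p
    by_cases h : ∃ Z, Good G Z ∧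
        ¬ ∃ c, IsCfg s π f φ p.1 c ∧ (∀ u, π (c.1 u) ∈ Z) ∧ res c = p.2
    · obtain ⟨Z, hZ, h⟩ := h
      exact ⟨Z, hZ, fun _ => h⟩
    · exact ⟨_, Good.univ G, fun h' => absurd h' h⟩
  choose Y hY hkill using key
  have hYs : Good G (⋂ p, Y p) := Good.iInter hY
  refine ⟨⋂ p, Y p, hYs, ?_⟩
  intro n c hc hcY
  have hdep : ¬ ∀ x ∈ ((fun c : Cfg n => π (c.1 (fun i => s n i))) ''
      {d | IsCfg s π f φ n d ∧ (∀ u, π (d.1 u) ∈ ⋂ p, Y p) ∧ res d = res c}),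
      ∀ y ∈ ((fun c : Cfg n => π (c.1 (fun i => s n i))) ''
      {d | IsCfg s π f φ n d ∧ (∀ u, π (d.1 u) ∈ ⋂ p, Y p) ∧ res d = res c}), (x, y) ∉ G := by
    intro hind
    obtain ⟨B, hAB, hB, hBi⟩ := indep_hull hG
      (analytic_eval s hπ hf hφ n hYs.meas (res c) (fun i => s n i)) hind
    refine hkill ⟨n, res c⟩ ⟨(⋂ p, Y p) \ B, hYs.diff hB hBi, ?_⟩
      ⟨c, hc, fun u => mem_iInter.1 (hcY u) _, rfl⟩
    rintro ⟨d, hd, hdY, hdr⟩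
    exact (hdY _).2 (hAB ⟨d, ⟨hd, fun u => (hdY u).1, hdr⟩, rfl⟩)
  push Not at hdep
  obtain ⟨_, ⟨c0, ⟨h0, h0Y, h0r⟩, rfl⟩, _, ⟨c1, ⟨h1, h1Y, h1r⟩, rfl⟩, hxy⟩ := hdep
  have hxy' := hxy
  rw [← hfG] at hxy
  obtain ⟨w, hw⟩ := hxy
  dsimp only at hw hxy'
  have e0 := hGφ _ _ hxy'
  have r01 : ∀ u, ∀ i < n, c0.1 u i = c.1 u i := fun u i hi =>
    congrFun (congrFun (congrArg Prod.fst h0r) u) ⟨i, hi⟩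
  have r02 : ∀ k u, ∀ i < n, c0.2 k u i = c.2 k u i := fun k u i hi =>
    congrFun (congrFun (congrFun (congrArg Prod.snd h0r) k) u) ⟨i, hi⟩
  have r11 : ∀ u, ∀ i < n, c1.1 u i = c.1 u i := fun u i hi =>
    congrFun (congrFun (congrArg Prod.fst h1r) u) ⟨i, hi⟩
  have r12 : ∀ k u, ∀ i < n, c1.2 k u i = c.2 k u i := fun k u i hi =>
    congrFun (congrFun (congrFun (congrArg Prod.snd h1r) k) u) ⟨i, hi⟩
  let C : Bool → Cfg n := fun b => cond b c1 c0
  have hC : ∀ b, IsCfg s π f φ n (C b) := by rintro (_ | _); exacts [h0, h1]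
  have hCY : ∀ b u, π ((C b).1 u) ∈ ⋂ p, Y p := by rintro (_ | _); exacts [h0Y, h1Y]
  have hC1 : ∀ b u, ∀ i < n, (C b).1 u i = c.1 u i := by rintro (_ | _); exacts [r01, r11]
  have hC2 : ∀ b k u, ∀ i < n, (C b).2 k u i = c.2 k u i := by rintro (_ | _); exacts [r02, r12]
  have hCφ : ∀ b u, φ (π ((C b).1 u)) = φ (π (c0.1 (fun i => s n i))) := by
    rintro (_ | _) u
    · exact h0.1 _ _
    · rw [e0]; exact h1.1 _ _
  refine ⟨(fun u => (C (u (Fin.last n))).1 (Fin.init u),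
    fun k u => Fin.lastCases (motive := fun _ => ℕ → ℕ) w
      (fun k => (C (u (Fin.last n))).2 k (Fin.init u)) k), ⟨?_, ?_⟩, ?_, ?_, ?_⟩
  · intro u v
    simp only [hCφ]
  · intro k u hu
    induction k using Fin.lastCases with
    | last =>
      have hi : Fin.init u = fun i : Fin n => s n i := by
        funext i
        exact hu i.castSucc (Fin.castSucc_lt_last i)
      simp only [Fin.lastCases_last, Function.update_self, Fin.init_update_last, hi]
      exact hw
    | cast k =>
      have hne : Fin.last n ≠ k.castSucc := (Fin.castSucc_lt_last k).ne'
      simp only [Fin.lastCases_castSucc, Function.update_of_ne hne, Fin.init_update_castSucc]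
      exact (hC _).2 k (Fin.init u) fun i hi => hu i.castSucc hi
  · exact fun u => hCY _ _
  · exact fun u i hi => hC1 _ _ i hi
  · intro k u i hi
    simp only [Fin.lastCases_castSucc]
    exact hC2 _ _ _ i hi

/-- The limit of a coherent sequence of configurations. -/
lemma exists_limit {X X' : Type*} [TopologicalSpace X] [T2Space X] [TopologicalSpace X']
    [T2Space X'] (s : ℕ → ℕ → Bool) {π : (ℕ → ℕ) → X} (hπ : Continuous π)
    {f : (ℕ → ℕ) → X × X} (hf : Continuous f)
    {φ : X → X'} (hφ : Continuous (φ ∘ π)) (c : ∀ n, Cfg n)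
    (hc : ∀ n, IsCfg s π f φ n (c n))
    (h1 : ∀ n u, ∀ i < n, (c (n + 1)).1 u i = (c n).1 (Fin.init u) i)
    (h2 : ∀ n k u, ∀ i < n, (c (n + 1)).2 (Fin.castSucc k) u i = (c n).2 k (Fin.init u) i) :
    ∃ ψ : (ℕ → Bool) → X, Continuous ψ ∧ (∀ x y, φ (ψ x) = φ (ψ y)) ∧
      ∀ (k : ℕ) x, (∀ i < k, x i = s k i) →
        (ψ (Function.update x k false), ψ (Function.update x k true)) ∈ range f := by
  let A : ℕ → (ℕ → Bool) → ℕ → ℕ := fun n x => (c n).1 (fun i => x i)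
  let B : ℕ → ℕ → (ℕ → Bool) → ℕ → ℕ := fun n k x =>
    if h : k < n then (c n).2 ⟨k, h⟩ (fun i => x i) else 0
  have hA : ∀ n x, ∀ i < n, A (n + 1) x i = A n x i := fun n x i hi => h1 n _ i hi
  have hB : ∀ n k x, k < n → ∀ i < n, B (n + 1) k x i = B n k x i := by
    intro n k x hk i hi
    simp only [B, hk, Nat.lt_succ_of_lt hk, dif_pos]
    exact h2 n ⟨k, hk⟩ _ i hi
  have hA' : ∀ n m x i, i < n → n ≤ m → A m x i = A n x i := by
    intro n m x i hi hnm
    induction m, hnm using Nat.le_induction with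
    | base => rfl
    | succ m hm ih => rw [hA m x i (by omega), ih]
  have hB' : ∀ n m k x i, k < n → i < n → n ≤ m → B m k x i = B n k x i := by
    intro n m k x i hk hi hnm
    induction m, hnm using Nat.le_induction with
    | base => rfl
    | succ m hm ih => rw [hB m k x (by omega) i (by omega), ih]
  let α : (ℕ → Bool) → ℕ → ℕ := fun x j => A (j + 1) x j
  let β : ℕ → (ℕ → Bool) → ℕ → ℕ := fun k x j => B (max j k + 1) k x j
  have tA : ∀ x, Tendsto (fun n => A n x) atTop (𝓝 (α x)) := by
    intro x
    rw [tendsto_pi_nhds]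
    intro j
    apply tendsto_const_nhds.congr'
    filter_upwards [eventually_ge_atTop (j + 1)] with n hn
    exact (hA' _ _ x j (by omega) hn).symm
  have tB : ∀ k x, Tendsto (fun n => B n k x) atTop (𝓝 (β k x)) := by
    intro k x
    rw [tendsto_pi_nhds]
    intro j
    apply tendsto_const_nhds.congr'
    filter_upwards [eventually_ge_atTop (max j k + 1)] with n hn
    exact (hB' _ _ k x j (by omega) (by omega) hn).symm
  have cα : Continuous α := by
    apply continuous_pi
    intro j
    have : Continuous fun x : ℕ → Bool => (fun i : Fin (j + 1) => x i) := by fun_prop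
    exact (continuous_of_discreteTopology
      (f := fun u : Fin (j + 1) → Bool => (c (j + 1)).1 u j)).comp this
  refine ⟨π ∘ α, hπ.comp cα, ?_, ?_⟩
  · intro x y
    refine tendsto_nhds_unique ((hφ.tendsto _).comp (tA x)) ?_
    refine ((hφ.tendsto _).comp (tA y)).congr fun n => ?_
    exact (hc n).1 _ _
  · intro k x hx
    refine ⟨β k x, ?_⟩
    refine tendsto_nhds_unique ((hf.tendsto _).comp (tB k x)) ?_
    refine Tendsto.congr' ?_ (((hπ.tendsto _).comp (tA (Function.update x k false))).prodMk_nhds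
      ((hπ.tendsto _).comp (tA (Function.update x k true))))
    filter_upwards [eventually_gt_atTop k] with n hn
    have hu : ∀ b, (fun i : Fin n => Function.update x k b i)
        = Function.update (fun i : Fin n => x i) ⟨k, hn⟩ b := by
      intro b
      funext i
      by_cases h : i = ⟨k, hn⟩
      · subst h; simp
      · rw [Function.update_of_ne h, Function.update_of_ne]
        intro h'
        exact h (Fin.ext h')
    have := (hc n).2 ⟨k, hn⟩ (fun i => x i) (fun i hi => hx i hi)
    simp only [Function.comp, A, B, hn, dif_pos, hu]
    exact this.symm

/-- The category argument. -/
lemma no_hom (s : ℕ → ℕ → Bool)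
    (hs : ∀ (y : ℕ → Bool) m, ∃ n ≥ m, ∀ i < m, s n i = y i)
    {ι : Type*} {I : Set ι} (hI : I.Countable) (W : ι → Set (ℕ → Bool))
    (hW : ∀ i, BaireMeasurableSet (W i)) (hcov : ∀ x, ∃ i ∈ I, x ∈ W i) :
    ∃ i ∈ I, ∃ (k : ℕ) (x : ℕ → Bool), (∀ j < k, x j = s k j) ∧
      Function.update x k false ∈ W i ∧ Function.update x k true ∈ W i := by
  have hne : ¬ IsMeagre (⋃ i ∈ I, W i) := by
    have : (⋃ i ∈ I, W i) = univ := by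
      ext x; simpa using hcov x
    rw [this]
    exact not_isMeagre_of_isOpen isOpen_univ univ_nonempty
  obtain ⟨i, hi, hWi⟩ : ∃ i ∈ I, ¬ IsMeagre (W i) := by
    by_contra! h
    exact hne (isMeagre_biUnion hI h)
  obtain ⟨U, hU, hUW⟩ := (hW i).residualEq_isOpen
  have hZ : {x | x ∈ W i ↔ x ∈ U} ∈ residual (ℕ → Bool) := by
    filter_upwards [hUW] with x hx
    exact iff_of_eq hx
  have hUne : U.Nonempty := by
    by_contra hemp
    rw [not_nonempty_iff_eq_empty] at hemp
    apply hWi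
    filter_upwards [hZ] with x hx
    subst hemp
    simpa using hx
  obtain ⟨y, hy⟩ := hUne
  obtain ⟨m, hm⟩ : ∃ m : ℕ, ∀ x : ℕ → Bool, (∀ j < m, x j = y j) → x ∈ U := by
    obtain ⟨m, hm⟩ := PiNat.exists_disjoint_cylinder hU.isClosed_compl (x := y) (by simpa using hy)
    refine ⟨m, fun x hx => ?_⟩
    by_contra hxU
    exact Set.disjoint_left.1 hm hxU (fun j hj => hx j hj)
  obtain ⟨n, hmn, hn⟩ := hs y m
  let τ : (ℕ → Bool) → (ℕ → Bool) := fun x => Function.update x n (!x n)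
  have hτ : Continuous τ := by
    apply continuous_id.update
    exact (continuous_of_discreteTopology (f := Bool.not)).comp (continuous_apply (A := fun _ => Bool) n)
  have hττ : ∀ x, τ (τ x) = x := by
    intro x
    simp [τ]
  let T : (ℕ → Bool) ≃ₜ (ℕ → Bool) := ⟨⟨τ, τ, hττ, hττ⟩, hτ, hτ⟩
  have hZ' : τ ⁻¹' {x | x ∈ W i ↔ x ∈ U} ∈ residual (ℕ → Bool) :=
    tendsto_residual_of_isOpenMap T.continuous T.isOpenMap hZ
  have hK : IsOpen {x : ℕ → Bool | ∀ j < n, x j = s n j} := by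
    have : {x : ℕ → Bool | ∀ j < n, x j = s n j} = ⋂ j ∈ Set.Iio n, (fun x => x j) ⁻¹' {s n j} := by
      ext x; simp
    rw [this]
    exact (Set.finite_Iio n).isOpen_biInter fun j _ =>
      (isOpen_discrete _).preimage (continuous_apply j)
  obtain ⟨x, hxK, hx, hx'⟩ := (dense_of_mem_residual (inter_mem hZ hZ')).inter_open_nonempty _ hK
    ⟨s n, fun _ _ => rfl⟩
  have hKU : ∀ x : ℕ → Bool, (∀ j < n, x j = s n j) → x ∈ U := fun x hx =>
    hm x fun j hj => (hx j (by omega)).trans (hn j hj)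
  have hτK : ∀ j < n, τ x j = s n j := by
    intro j hj
    simp only [τ]
    rw [Function.update_of_ne (by omega)]
    exact hxK j hj
  have w1 : x ∈ W i := hx.2 (hKU x hxK)
  have w2 : τ x ∈ W i := hx'.2 (hKU _ hτK)
  refine ⟨i, hi, n, x, hxK, ?_⟩
  cases hb : x n with
  | false =>
    have e1 : Function.update x n false = x := by rw [← hb]; simp
    have e2 : τ x = Function.update x n true := by simp [τ, hb]
    rw [e1, ← e2]
    exact ⟨w1, w2⟩
  | true =>
    have e1 : Function.update x n true = x := by rw [← hb]; simp
    have e2 : τ x = Function.update x n false := by simp [τ, hb]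
    rw [e1, ← e2]
    exact ⟨w2, w1⟩

lemma exists_dense_seq : ∃ s : ℕ → ℕ → Bool,
    ∀ (y : ℕ → Bool) m, ∃ n ≥ m, ∀ i < m, s n i = y i := by
  refine ⟨fun n => TopologicalSpace.denseSeq (ℕ → Bool) n.unpair.1, fun y m => ?_⟩
  have hK : IsOpen {x : ℕ → Bool | ∀ j < m, x j = y j} := by
    have : {x : ℕ → Bool | ∀ j < m, x j = y j} = ⋂ j ∈ Set.Iio m, (fun x => x j) ⁻¹' {y j} := by
      ext x; simp
    rw [this]
    exact (Set.finite_Iio m).isOpen_biInter fun j _ =>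
      (isOpen_discrete _).preimage (continuous_apply j)
  obtain ⟨x, hx, k, rfl⟩ := (TopologicalSpace.denseRange_denseSeq (ℕ → Bool)).inter_open_nonempty
    _ hK ⟨y, fun _ _ => rfl⟩
  refine ⟨Nat.pair k m, Nat.right_le_pair k m, ?_⟩
  simpa using hx

/-- The graph has a countable Borel colouring. -/
lemma exists_cover {X X' : Type*} [TopologicalSpace X] [PolishSpace X]
    [MeasurableSpace X] [BorelSpace X]
    [TopologicalSpace X'] [PolishSpace X'] [MeasurableSpace X'] [BorelSpace X']
    (E : X → X → Prop) (hE : Equivalence E)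
    (hEBorel : MeasurableSet {p : X × X | E p.1 p.2})
    (φ : X → X') (hφ : Measurable φ)
    (hindex : ∀ x : X, ∃ D : Set X, D.Countable ∧ ∀ y, φ x = φ y → ∃ d ∈ D, E y d)
    {G : Set (X × X)} (hG : MeasurableSet G)
    (hGd : ∀ x y, (x, y) ∈ G ↔ φ x = φ y ∧ ¬ E x y) :
    ∃ S : Set (Set X), S.Countable ∧
      (∀ C ∈ S, MeasurableSet C ∧ ∀ x ∈ C, ∀ y ∈ C, (x, y) ∉ G) ∧ ⋃₀ S = univ := by
  rcases isEmpty_or_nonempty X with hX | hX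
  · exact ⟨∅, countable_empty, by simp, Subsingleton.elim _ _⟩
  have hGa := hG.analyticSet
  rw [AnalyticSet] at hGa
  rcases hGa with hemp | ⟨f, hf, hfG⟩
  · exact ⟨{univ}, countable_singleton _, by simp [hemp], by simp⟩
  obtain ⟨π, hπ, hπs, hφπ⟩ : ∃ π : (ℕ → ℕ) → X, Continuous π ∧ Function.Surjective π ∧
      Continuous (φ ∘ π) := by
    obtain ⟨t', ht, hc, hp⟩ := hφ.exists_continuous
    obtain ⟨π, h1, h2⟩ := @PolishSpace.exists_nat_nat_continuous_surjective X t' hp hX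
    exact ⟨π, continuous_le_rng ht h1, h2, @Continuous.comp _ _ _ _ t' _ _ _ hc h1⟩
  obtain ⟨s, hs⟩ := exists_dense_seq
  obtain ⟨Y, ⟨S, hS1, hS2, hYS⟩, hstep⟩ := exists_stable s hπ hf hφπ hG hfG
    (fun x y h => ((hGd x y).1 h).1)
  refine ⟨S, hS1, hS2, ?_⟩
  by_contra hSu
  have hYne : Y.Nonempty := by
    rw [hYS, nonempty_compl]
    exact hSu
  obtain ⟨y, hy⟩ := hYne
  obtain ⟨a, rfl⟩ := hπs y
  let T : ℕ → Type := fun n => {c : Cfg n // IsCfg s π f φ n c ∧ ∀ u, π (c.1 u) ∈ Y}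
  have hstep' : ∀ n (c : T n), ∃ d : T (n + 1),
      (∀ u, ∀ i < n, d.1.1 u i = c.1.1 (Fin.init u) i) ∧
        (∀ k u, ∀ i < n, d.1.2 (Fin.castSucc k) u i = c.1.2 k (Fin.init u) i) := by
    rintro n ⟨c, hc, hcY⟩
    obtain ⟨d, hd1, hd2, hd3⟩ := hstep n c hc hcY
    exact ⟨⟨d, hd1, hd2⟩, hd3⟩
  choose N hN using hstep'
  let c : ∀ n, T n := fun n => Nat.rec (motive := T)
    ⟨(fun _ => a, fun k => k.elim0), ⟨fun _ _ => rfl, fun k => k.elim0⟩, fun _ => hy⟩ N n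
  obtain ⟨ψ, hψ, hψφ, hψe⟩ := exists_limit s hπ hf hφπ (fun n => (c n).1) (fun n => (c n).2.1)
    (fun n => (hN n (c n)).1) (fun n => (hN n (c n)).2)
  obtain ⟨D, hD, hDc⟩ := hindex (ψ fun _ => false)
  obtain ⟨d, hd, k, x, hx, hw1, hw2⟩ := no_hom s hs hD (fun d => ψ ⁻¹' {y | E y d})
    (fun d => by
      borelize (ℕ → Bool)
      have : MeasurableSet {y | E y d} :=
        (measurable_id.prodMk measurable_const : Measurable fun y : X => (y, d)) hEBorel
      exact (hψ.measurable this).baireMeasurableSet)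
    (fun x => hDc _ (hψφ _ _))
  have := hψe k x hx
  rw [hfG, hGd] at this
  exact this.2 (hE.trans hw1 (hE.symm hw2))

end St15


/-- Let `E ⊆ F` be Borel equivalence relations with `E` of countable
index in `F`, let `φ` be a Borel reduction of `F` to a countable equivalence relation
`F'` on a Polish space `X'`, and let `D = (φ × φ)⁻¹(=)`. Then `D ∩ E` is smooth. -/
theorem statement15 {X X' : Type*} [TopologicalSpace X] [PolishSpace X]
    [MeasurableSpace X] [BorelSpace X]
    [TopologicalSpace X'] [PolishSpace X'] [MeasurableSpace X'] [BorelSpace X']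
    (E F : X → X → Prop) (hE : Equivalence E) (hF : Equivalence F)
    (hEBorel : MeasurableSet {p : X × X | E p.1 p.2})
    (hFBorel : MeasurableSet {p : X × X | F p.1 p.2})
    (hEF : ∀ x y, E x y → F x y)
    (hindex : ∀ x : X, ∃ D : Set X, D.Countable ∧ ∀ y, F x y → ∃ d ∈ D, E y d)
    (F' : X' → X' → Prop) (hF' : Equivalence F')
    (hF'count : ∀ y : X', {z : X' | F' y z}.Countable)
    (φ : X → X') (hφ : Measurable φ)
    (hred : ∀ x y, F x y ↔ F' (φ x) (φ y)) :
    ∃ g : X → (ℕ → Bool), Measurable g ∧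
      ∀ x y, (φ x = φ y ∧ E x y) ↔ g x = g y := by
  classical
  have hRm : MeasurableSet {p : X × X | φ p.1 = φ p.2 ∧ E p.1 p.2} :=
    (measurableSet_eq_fun (hφ.comp measurable_fst) (hφ.comp measurable_snd)).inter hEBorel
  have hGm : MeasurableSet {p : X × X | φ p.1 = φ p.2 ∧ ¬ E p.1 p.2} :=
    (measurableSet_eq_fun (hφ.comp measurable_fst) (hφ.comp measurable_snd)).inter hEBorel.compl
  obtain ⟨S, hS, hSi, hSu⟩ := St15.exists_cover E hE hEBorel φ hφ
    (fun x => by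
      obtain ⟨D, hD, h⟩ := hindex x
      refine ⟨D, hD, fun y hy => h y ?_⟩
      rw [hred, hy]
      exact hF'.refl _) hGm (fun x y => Iff.rfl)
  have hB : ∀ C : S, ∃ U : Set X, C.1 ⊆ U ∧ MeasurableSet U ∧
      (∀ x y, φ x = φ y → E x y → x ∈ U → y ∈ U) ∧
      (∀ x y, φ x = φ y → ¬ E x y → x ∈ C.1 → y ∉ U) := by
    rintro ⟨C, hC⟩
    obtain ⟨hCm, hCi⟩ := hSi C hC
    obtain ⟨U, h1, h2, h3, h4⟩ := St15.inv_sep hRm hCm.analyticSet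
      (St15.analytic_nbr hGm hCm.analyticSet)
      (by
        rintro x y ⟨hxy, hexy⟩ ⟨z, hz, hzy, hezy⟩
        exact ⟨z, hz, hzy.trans hxy.symm, fun h => hezy (hE.trans h hexy)⟩)
      (by
        rw [Set.disjoint_left]
        rintro y hy ⟨x, hx, hxy⟩
        exact hCi x hx y hy hxy)
    exact ⟨U, h1, h2, fun x y hxy he => h4 x y ⟨hxy, he⟩,
      fun x y hxy he hx hy => Set.disjoint_left.1 h3 hy ⟨x, hx, hxy, he⟩⟩
  choose U hCU hUm hUinv hUsep using hB
  have : Countable S := hS.to_subtype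
  obtain ⟨e, he⟩ := exists_injective_nat S
  let v : X → ℕ → Bool := fun x n => decide (∃ C : S, e C = n ∧ x ∈ U C)
  have hv : Measurable v := by
    apply measurable_pi_lambda
    intro n
    apply measurable_to_bool
    have : (fun x => v x n) ⁻¹' {true} = ⋃ C : S, ⋃ _ : e C = n, U C := by
      ext x; simp [v]
    rw [this]
    exact MeasurableSet.iUnion fun C => MeasurableSet.iUnion fun _ => hUm C
  let w : X → ℕ → Bool := fun x => MeasurableSpace.mapNatBool X' (φ x)
  have hw : Measurable w := (MeasurableSpace.measurable_mapNatBool X').comp hφ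
  refine ⟨fun x n => Sum.elim (w x) (v x) (Equiv.natSumNatEquivNat.symm n), ?_, ?_⟩
  · apply measurable_pi_lambda
    intro n
    cases Equiv.natSumNatEquivNat.symm n with
    | inl m => exact (measurable_pi_apply m).comp hw
    | inr m => exact (measurable_pi_apply m).comp hv
  · intro x y
    constructor
    · rintro ⟨hxy, hexy⟩
      have h1 : w x = w y := by simp only [w, hxy]
      have h2 : v x = v y := by
        funext n
        simp only [v]
        congr 1
        apply propext
        refine exists_congr fun C => and_congr_right fun _ => ?_
        exact ⟨hUinv C x y hxy hexy, hUinv C y x hxy.symm (hE.symm hexy)⟩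
      simp only [h1, h2]
    · intro h
      have h1 : w x = w y := by
        funext n
        simpa using congrFun h (Equiv.natSumNatEquivNat (Sum.inl n))
      have h2 : v x = v y := by
        funext n
        simpa using congrFun h (Equiv.natSumNatEquivNat (Sum.inr n))
      have hxy : φ x = φ y := MeasurableSpace.injective_mapNatBool X' h1
      refine ⟨hxy, ?_⟩
      by_contra hne
      obtain ⟨C, hC, hxC⟩ := mem_sUnion.1 (hSu ▸ mem_univ x : x ∈ ⋃₀ S)
      have h3 := congrFun h2 (e ⟨C, hC⟩)
      have h4 : v x (e ⟨C, hC⟩) = true := by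
        simp only [v, decide_eq_true_eq]
        exact ⟨⟨C, hC⟩, rfl, hCU ⟨C, hC⟩ hxC⟩
      rw [h4] at h3
      obtain ⟨C', hC', hyU⟩ := of_decide_eq_true h3.symm
      have := he hC'
      subst this
      exact hUsep ⟨C, hC⟩ x y hxy hne hxC hyU
end

section
/- Let X be a Polish space, A ⊆ X an analytic set, E a Borel equivalence relation on X, G an acyclic Borel graph on X whose connected components are the E-classes, and n a natural number such that for every x ∈ A there is a countable set C contained in the E-class of x which is complete with respect to the relation G^{≤n} restricted to A ∩ [x]_E (i.e., every point of A ∩ [x]_E is joined by a G-path of length at most n to a point of C). Then, assuming the case n = 0 and the inductive machinery (reflection and Lusin–Novikov), there is a Borel set B ⊆ X such that every point of A is joined by a G-path of length at most n to a point of B, and E restricted to B has all classes countable. In particular, prove the base case n = 0: if for every x ∈ A the set A ∩ [x]_E itself is countable, then there is a Borel set B ⊇ A on which E has all classes countable. -/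
open Set MeasureTheory

set_option linter.unusedSectionVars false

section AuxAnalytic

theorem aux_inter {α : Type*} [TopologicalSpace α] [T2Space α] {s t : Set α}
    (hs : AnalyticSet s) (ht : AnalyticSet t) : AnalyticSet (s ∩ t) := by
  rw [inter_eq_iInter]
  refine AnalyticSet.iInter ?_
  rintro (_ | _)
  · exact ht
  · exact hs

theorem aux_union {α : Type*} [TopologicalSpace α] {s t : Set α}
    (hs : AnalyticSet s) (ht : AnalyticSet t) : AnalyticSet (s ∪ t) := by
  rw [union_eq_iUnion]
  refine AnalyticSet.iUnion ?_
  rintro (_ | _)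
  · exact ht
  · exact hs

theorem aux_preimage {α β : Type*} [TopologicalSpace α] [PolishSpace α] [TopologicalSpace β]
    [T2Space β] {s : Set β} (hs : AnalyticSet s) {f : α → β} (hf : Continuous f) :
    AnalyticSet (f ⁻¹' s) := by
  rw [AnalyticSet] at hs
  rcases hs with rfl | ⟨g, hg, rfl⟩
  · simpa using analyticSet_empty
  · have hc : IsClosed {p : α × (ℕ → ℕ) | f p.1 = g p.2} :=
      isClosed_eq (hf.comp continuous_fst) (hg.comp continuous_snd)
    have := hc.analyticSet.image_of_continuous continuous_fst
    convert this using 1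
    ext x
    simp [eq_comm]

variable {Z Y : Type*} [TopologicalSpace Z] [PolishSpace Z] [MeasurableSpace Z] [BorelSpace Z]
  [TopologicalSpace Y] [PolishSpace Y] [MeasurableSpace Y] [BorelSpace Y]

/-- One-step reflection: a set which is independent for a symmetric Borel relation. -/
theorem aux_indep (R : Set (Z × Z)) (hR : MeasurableSet R) (hsym : ∀ p q, (p, q) ∈ R → (q, p) ∈ R)
    (Q : Set Z) (hQ : AnalyticSet Q) (hQR : ∀ p ∈ Q, ∀ q ∈ Q, (p, q) ∉ R) :
    ∃ B : Set Z, MeasurableSet B ∧ Q ⊆ B ∧ ∀ p ∈ B, ∀ q ∈ B, (p, q) ∉ R := by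
  have key : ∀ S : Set Z, AnalyticSet S → AnalyticSet {p | ∃ q ∈ S, (p, q) ∈ R} := by
    intro S hS
    have := (aux_inter hR.analyticSet (aux_preimage hS
      (continuous_snd : Continuous (Prod.snd : Z × Z → Z)))).image_of_continuous continuous_fst
    convert this using 1
    ext p
    simp [and_comm]
  obtain ⟨B0, h1, h2, h3⟩ := hQ.measurablySeparable (key Q hQ) (by
    rw [Set.disjoint_left]
    rintro p hp ⟨q, hq, hpq⟩
    exact hQR p hp q hq hpq)
  obtain ⟨B1, h1', h2', h3'⟩ := hQ.measurablySeparable (key B0 h3.analyticSet) (by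
    rw [Set.disjoint_left]
    rintro p hp ⟨q, hq, hpq⟩
    exact Set.disjoint_left.1 h2 ⟨p, hp, hsym _ _ hpq⟩ hq)
  refine ⟨B0 ∩ B1, h3.inter h3', subset_inter h1 h1', ?_⟩
  rintro p hp q hq hpq
  exact Set.disjoint_left.1 h2' ⟨q, hq.1, hpq⟩ hp.2

/-- The section of `B` over each point has at most one element. -/
def AuxUniq {Z Y : Type*} (B : Set (Z × Y)) : Prop :=
  ∀ z y y', (z, y) ∈ B → (z, y') ∈ B → y = y'

theorem aux_uniq (Q : Set (Z × Y)) (hQ : AnalyticSet Q) (hu : AuxUniq Q) :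
    ∃ B : Set (Z × Y), MeasurableSet B ∧ Q ⊆ B ∧ AuxUniq B := by
  obtain ⟨B, hB, hQB, hi⟩ := aux_indep
    {r : (Z × Y) × (Z × Y) | r.1.1 = r.2.1 ∧ ¬ r.1.2 = r.2.2}
    (by
      refine MeasurableSet.inter ?_ (MeasurableSet.compl ?_)
      · exact measurableSet_eq_fun (by fun_prop) (by fun_prop)
      · exact measurableSet_eq_fun (by fun_prop) (by fun_prop))
    (by rintro p q ⟨h1, h2⟩; exact ⟨h1.symm, fun h => h2 h.symm⟩) Q hQ
    (by
      rintro ⟨z, y⟩ hp ⟨z', y'⟩ hq ⟨h1, h2⟩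
      simp only at h1 h2
      subst h1
      exact h2 (hu _ _ _ hp hq))
  refine ⟨B, hB, hQB, ?_⟩
  intro z y y' h h'
  by_contra hne
  exact hi _ h _ h' ⟨rfl, hne⟩

/-- Finite generalized Lusin separation. -/
theorem aux_sep {ι : Type} [Finite ι] (S : ι → Set Z) (hS : ∀ i, AnalyticSet (S i))
    (he : ∀ z, ∃ i, z ∉ S i) :
    ∃ M : ι → Set Z, (∀ i, MeasurableSet (M i)) ∧ (∀ i, S i ⊆ M i) ∧ ∀ z, ∃ i, z ∉ M i := by
  classical
  have := Fintype.ofFinite ι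
  suffices H : ∀ F : Finset ι, ∃ M : ι → Set Z, (∀ i, AnalyticSet (M i)) ∧
      (∀ i ∈ F, MeasurableSet (M i)) ∧ (∀ i, S i ⊆ M i) ∧ ∀ z, ∃ i, z ∉ M i by
    obtain ⟨M, _, h1, h2, h3⟩ := H Finset.univ
    exact ⟨M, fun i => h1 i (Finset.mem_univ i), h2, h3⟩
  intro F
  induction F using Finset.induction_on with
  | empty => exact ⟨S, hS, by simp, fun i => Subset.rfl, he⟩
  | insert i F hi ih =>
    obtain ⟨M, h0, h1, h2, h3⟩ := ih
    have hT : AnalyticSet (⋂ j : ι, if j = i then univ else M j) := by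
      have : Nonempty ι := ⟨i⟩
      refine AnalyticSet.iInter fun j => ?_
      split_ifs
      · exact MeasurableSet.univ.analyticSet
      · exact h0 j
    obtain ⟨B, b1, b2, b3⟩ := (h0 i).measurablySeparable hT (by
      rw [Set.disjoint_left]
      intro z hz hz'
      obtain ⟨j, hj⟩ := h3 z
      rw [mem_iInter] at hz'
      have := hz' j
      split_ifs at this with h
      · subst h; exact hj hz
      · exact hj this)
    refine ⟨Function.update M i B, ?_, ?_, ?_, ?_⟩
    · intro j
      by_cases h : j = i
      · subst h; simpa using b3.analyticSet
      · simpa [h] using h0 j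
    · intro j hj
      by_cases h : j = i
      · subst h; simpa using b3
      · simpa [h] using h1 j (by simpa [h] using hj)
    · intro j
      by_cases h : j = i
      · subst h; simpa using (h2 j).trans b1
      · simpa [h] using h2 j
    · intro z
      by_contra! hall
      have hzB : z ∈ B := by simpa using hall i
      refine Set.disjoint_left.1 b2 ?_ hzB
      rw [mem_iInter]
      intro j
      split_ifs with h
      · trivial
      · simpa [h] using hall j

/-- Countable union of Borel sets with sections having at most one point. -/
def AuxSmall {Z Y : Type*} [MeasurableSpace Z] [MeasurableSpace Y] (V : Set (Z × Y)) : Prop :=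
  ∃ B : ℕ → Set (Z × Y), (∀ k, MeasurableSet (B k)) ∧ (∀ k, AuxUniq (B k)) ∧ V = ⋃ k, B k

theorem AuxSmall.meas {V : Set (Z × Y)} (h : AuxSmall V) : MeasurableSet V := by
  obtain ⟨B, h1, _, rfl⟩ := h
  exact MeasurableSet.iUnion h1

theorem AuxSmall.iUnion {κ : Type*} [Countable κ] {V : κ → Set (Z × Y)}
    (h : ∀ a, AuxSmall (V a)) : AuxSmall (⋃ a, V a) := by
  rcases isEmpty_or_nonempty κ with hκ | hκ
  · exact ⟨fun _ => ∅, fun _ => MeasurableSet.empty, fun _ => fun _ _ _ h => h.elim, by simp⟩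
  choose B h1 h2 h3 using h
  obtain ⟨e, he⟩ := exists_surjective_nat (κ × ℕ)
  refine ⟨fun k => B (e k).1 (e k).2, fun k => h1 _ _, fun k => h2 _ _, ?_⟩
  ext p
  simp only [h3, mem_iUnion]
  constructor
  · rintro ⟨a, k, hp⟩
    obtain ⟨m, hm⟩ := he (a, k)
    exact ⟨m, by rw [hm]; exact hp⟩
  · rintro ⟨m, hp⟩
    exact ⟨_, _, hp⟩

theorem AuxSmall.of_uniq {V : Set (Z × Y)} (hm : MeasurableSet V) (h : AuxUniq V) : AuxSmall V :=
  ⟨fun _ => V, fun _ => hm, fun _ => h, (iUnion_const V).symm⟩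

theorem AuxSmall.union {V W : Set (Z × Y)} (hV : AuxSmall V) (hW : AuxSmall W) :
    AuxSmall (V ∪ W) := by
  rw [union_eq_iUnion]
  refine AuxSmall.iUnion ?_
  rintro (_ | _)
  · exact hW
  · exact hV

theorem AuxSmall.countable {V : Set (Z × Y)} (hV : AuxSmall V) (z : Z) :
    {y | (z, y) ∈ V}.Countable := by
  obtain ⟨B, h1, h2, rfl⟩ := hV
  have : {y | (z, y) ∈ ⋃ k, B k} = ⋃ k, {y | (z, y) ∈ B k} := by
    ext; simp
  rw [this]
  refine countable_iUnion fun k => Set.Subsingleton.countable ?_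
  intro y hy y' hy'
  exact h2 k z y y' hy hy'

/-- Joint positivity of a finite family of sets. -/
def AuxPos {Z Y : Type*} [MeasurableSpace Z] [MeasurableSpace Y] (g : (ℕ → ℕ) → Z × Y)
    {ι : Type} (c : ι → Set (ℕ → ℕ)) : Prop :=
  ∀ V : Set (Z × Y), AuxSmall V → ∃ z, ∀ i, ∃ w ∈ c i, (g w).1 = z ∧ g w ∉ V

theorem aux_split {g : (ℕ → ℕ) → Z × Y} (hg : Continuous g) {ι : Type} [Finite ι]
    (c : ι → Set (ℕ → ℕ)) (hc : ∀ i, IsOpen (c i)) (hpos : AuxPos g c)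
    (V : Set (Z × Y)) (hV : AuxSmall V) :
    ∃ z, ∃ w : ι × Bool → (ℕ → ℕ), (∀ i, w i ∈ c i.1 ∧ (g (w i)).1 = z ∧ g (w i) ∉ V) ∧
      ∀ i, (g (w (i, true))).2 ≠ (g (w (i, false))).2 := by
  by_contra hcon
  let Q : ι → Set (Z × Y) := fun i => g '' (c i) ∩ Vᶜ
  have hQ : ∀ i, AnalyticSet (Q i) := fun i =>
    aux_inter ((hc i).analyticSet_image hg) hV.meas.compl.analyticSet
  let S : ι → Set Z := fun i => {z | ∃ y y', (z, y) ∈ Q i ∧ (z, y') ∈ Q i ∧ y ≠ y'}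
  have hS : ∀ i, AnalyticSet (S i) := by
    intro i
    have hne : MeasurableSet {p : Z × Y × Y | ¬ p.2.1 = p.2.2} :=
      (measurableSet_eq_fun (by fun_prop) (by fun_prop)).compl
    have h1 : AnalyticSet ((fun p : Z × Y × Y => (p.1, p.2.1)) ⁻¹' Q i) :=
      aux_preimage (hQ i) (by fun_prop)
    have h2 : AnalyticSet ((fun p : Z × Y × Y => (p.1, p.2.2)) ⁻¹' Q i) :=
      aux_preimage (hQ i) (by fun_prop)
    have := (aux_inter h1 (aux_inter h2 hne.analyticSet)).image_of_continuous continuous_fst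
    convert this using 1
    ext z
    simp [S]
  obtain ⟨M, hM, hSM, hMe⟩ := aux_sep S hS (by
    intro z
    by_contra! hz
    apply hcon
    choose y y' h1 h2 h3 using hz
    choose a a1 a2 using fun i => (h1 i).1
    choose b b1 b2 using fun i => (h2 i).1
    refine ⟨z, fun i => if i.2 then a i.1 else b i.1, ?_, ?_⟩
    · rintro ⟨i, (_ | _)⟩
      · simpa [b1, b2] using (h2 i).2
      · simpa [a1, a2] using (h1 i).2
    · intro i
      simpa [a2, b2] using h3 i)
  have hB : ∀ i, ∃ B : Set (Z × Y), MeasurableSet B ∧ (Q i ∩ Prod.fst ⁻¹' (M i)ᶜ) ⊆ B ∧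
      AuxUniq B := by
    intro i
    refine aux_uniq _ (aux_inter (hQ i) (measurable_fst (hM i).compl).analyticSet) ?_
    intro z y y' h h'
    by_contra hne
    exact h.2 (hSM i ⟨y, y', h.1, h'.1, hne⟩)
  choose B b1 b2 b3 using hB
  obtain ⟨z, hz⟩ := hpos (V ∪ ⋃ i, B i) (hV.union (AuxSmall.iUnion fun i =>
    AuxSmall.of_uniq (b1 i) (b3 i)))
  obtain ⟨i, hi⟩ := hMe z
  obtain ⟨w, hw, hwz, hwV⟩ := hz i
  refine hwV (Or.inr (mem_iUnion.2 ⟨i, b2 i ⟨⟨⟨w, hw, rfl⟩, fun h => hwV (Or.inl h)⟩, ?_⟩⟩))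
  simpa [hwz] using hi

/-- Cylinder sets of length `N`. -/
def auxCyl (N : ℕ) (a : Fin N → ℕ) : Set (ℕ → ℕ) := {w | ∀ i : Fin N, w i = a i}

theorem auxCyl_open (N : ℕ) (a : Fin N → ℕ) : IsOpen (auxCyl N a) := by
  have : auxCyl N a = ⋂ i : Fin N, {w | w i = a i} := by ext; simp [auxCyl]
  rw [this]
  refine isOpen_iInter_of_finite fun i => ?_
  exact (isOpen_discrete ({a i} : Set ℕ)).preimage
    (continuous_apply (i : ℕ) : Continuous fun w : ℕ → ℕ => w i)

theorem auxCyl_nhds (w : ℕ → ℕ) (O : Set (ℕ → ℕ)) (hO : IsOpen O) (hw : w ∈ O) :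
    ∃ N, ∀ N' ≥ N, auxCyl N' (fun i => w i) ⊆ O := by
  obtain ⟨v, ⟨x, n, rfl⟩, h1, h2⟩ :=
    (PiNat.isTopologicalBasis_cylinders (fun _ : ℕ => ℕ)).exists_subset_of_mem_open hw hO
  refine ⟨n, fun N' hN' w' hw' => h2 ?_⟩
  intro i hi
  rw [hw' ⟨i, lt_of_lt_of_le hi hN'⟩]
  exact h1 i hi

theorem aux_step {g : (ℕ → ℕ) → Z × Y} (hg : Continuous g) {ι : Type} [Finite ι]
    (N : ℕ) (a : ι → Fin N → ℕ) (hpos : AuxPos g (fun i => auxCyl N (a i))) :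
    ∃ N', N < N' ∧ ∃ a' : ι × Bool → Fin N' → ℕ, AuxPos g (fun i => auxCyl N' (a' i)) ∧
      (∀ i b, auxCyl N' (a' (i, b)) ⊆ auxCyl N (a i)) ∧
      ∀ i, ∀ w ∈ auxCyl N' (a' (i, true)), ∀ w' ∈ auxCyl N' (a' (i, false)),
        (g w).2 ≠ (g w').2 := by
  by_contra! hcon
  let T := {p : (Σ N' : ℕ, (ι × Bool → Fin N' → ℕ)) // N < p.1 ∧
    (∀ i b, auxCyl p.1 (p.2 (i, b)) ⊆ auxCyl N (a i)) ∧
      ∀ i, ∀ w ∈ auxCyl p.1 (p.2 (i, true)), ∀ w' ∈ auxCyl p.1 (p.2 (i, false)),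
        (g w).2 ≠ (g w').2}
  have hT : ∀ t : T, ∃ V, AuxSmall V ∧ ¬ ∃ z, ∀ i, ∃ w ∈ auxCyl t.1.1 (t.1.2 i),
      (g w).1 = z ∧ g w ∉ V := by
    rintro ⟨⟨N', a'⟩, h1, h2, h3⟩
    by_contra! hc
    obtain ⟨i, w, hw, w', hw', heq⟩ := hcon N' h1 a' (fun V hV => hc V hV) h2
    exact h3 i w hw w' hw' heq
  choose V hV hV' using hT
  obtain ⟨z, w, h1, h2⟩ := aux_split hg _ (fun i => auxCyl_open N (a i)) hpos (⋃ t, V t)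
    (AuxSmall.iUnion hV)
  have hex : ∀ i, ∃ K, ∀ N' ≥ K, ∀ v ∈ auxCyl N' (fun j => w (i, true) j),
      ∀ v' ∈ auxCyl N' (fun j => w (i, false) j), (g v).2 ≠ (g v').2 := by
    intro i
    obtain ⟨O1, O2, o1, o2, m1, m2, hd⟩ := t2_separation (h2 i)
    have hg2 : Continuous fun w => (g w).2 := hg.snd
    obtain ⟨K1, hK1⟩ := auxCyl_nhds (w (i, true)) _ (o1.preimage hg2) m1
    obtain ⟨K2, hK2⟩ := auxCyl_nhds (w (i, false)) _ (o2.preimage hg2) m2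
    refine ⟨max K1 K2, fun N' hN' v hv v' hv' heq => ?_⟩
    have e1 : (g v).2 ∈ O1 := hK1 N' (le_trans (le_max_left _ _) hN') hv
    have e2 : (g v').2 ∈ O2 := hK2 N' (le_trans (le_max_right _ _) hN') hv'
    rw [heq] at e1
    exact Set.disjoint_left.1 hd e1 e2
  choose K hK using hex
  obtain ⟨K0, hK0⟩ : BddAbove (range K) := (finite_range K).bddAbove
  let N' := max K0 (N + 1)
  have hN' : N < N' := lt_of_lt_of_le (Nat.lt_succ_self N) (le_max_right _ _)
  let t : T := ⟨⟨N', fun i j => w i j⟩, hN', by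
      intro i b v hv j
      have := hv ⟨j, lt_trans j.2 hN'⟩
      rw [this]
      exact (h1 (i, b)).1 j, by
      intro i
      exact hK i N' (le_trans (hK0 (mem_range_self i)) (le_max_left _ _))⟩
  refine hV' t ⟨z, fun i => ⟨w i, fun j => rfl, (h1 i).2.1, fun h => (h1 i).2.2 ?_⟩⟩
  exact mem_iUnion.2 ⟨t, h⟩

/-- Index types for the Cantor scheme. -/
def AuxI : ℕ → Type
  | 0 => Unit
  | k + 1 => AuxI k × Bool

instance auxI_finite : ∀ k, Finite (AuxI k)
  | 0 => inferInstanceAs (Finite Unit)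
  | k + 1 => by
    have := auxI_finite k
    exact inferInstanceAs (Finite (AuxI k × Bool))

/-- The branch through the index types. -/
def auxBr (σ : ℕ → Bool) : ∀ k, AuxI k
  | 0 => ()
  | k + 1 => (auxBr σ k, σ k)

theorem auxBr_congr (σ τ : ℕ → Bool) : ∀ k, (∀ i < k, σ i = τ i) → auxBr σ k = auxBr τ k
  | 0, _ => rfl
  | k + 1, h => by
    have h1 := auxBr_congr σ τ k (fun i hi => h i (Nat.lt_succ_of_lt hi))
    show (auxBr σ k, σ k) = (auxBr τ k, τ k)
    rw [h1, h k (Nat.lt_succ_self k)]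

/-- An analytic set with countable sections is covered by countably many Borel sets with
sections having at most one point. -/
theorem aux_cover (R : Set (Z × Y)) (hR : AnalyticSet R)
    (hc : ∀ z, {y | (z, y) ∈ R}.Countable) : ∃ V, AuxSmall V ∧ R ⊆ V := by
  rw [AnalyticSet] at hR
  rcases hR with rfl | ⟨g, hg, rfl⟩
  · exact ⟨∅, AuxSmall.of_uniq MeasurableSet.empty (fun _ _ _ h => h.elim), Subset.rfl⟩
  by_contra! hcon
  let State : ℕ → Type := fun k => {p : Σ N : ℕ, (AuxI k → Fin N → ℕ) // k ≤ p.1 ∧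
    AuxPos g (fun i => auxCyl p.1 (p.2 i))}
  have hpos0 : AuxPos g (fun _ : AuxI 0 => auxCyl 0 (fun i => i.elim0)) := by
    intro V hV
    obtain ⟨p, ⟨w, rfl⟩, hp⟩ := not_subset.1 (hcon V hV)
    exact ⟨_, fun i => ⟨w, fun i => i.elim0, rfl, hp⟩⟩
  have step : ∀ k (s : State k), ∃ s' : State (k + 1),
      (∀ (i : AuxI k) (b : Bool), auxCyl s'.1.1 (s'.1.2 (i, b)) ⊆ auxCyl s.1.1 (s.1.2 i)) ∧
      ∀ i : AuxI k, ∀ w ∈ auxCyl s'.1.1 (s'.1.2 (i, true)),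
        ∀ w' ∈ auxCyl s'.1.1 (s'.1.2 (i, false)), (g w).2 ≠ (g w').2 := by
    rintro k ⟨⟨N, a⟩, hk, hpos⟩
    obtain ⟨N', hN', a', h1, h2, h3⟩ := aux_step hg N a hpos
    exact ⟨⟨⟨N', a'⟩, by simp only at hk ⊢; omega, h1⟩, h2, h3⟩
  choose nxt hn1 hn2 using step
  let s : ∀ k, State k := fun k => Nat.rec ⟨⟨0, fun _ i => i.elim0⟩, le_rfl, hpos0⟩
    (fun k s => nxt k s) k
  have hs : ∀ k, s (k + 1) = nxt k (s k) := fun k => rfl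
  let C : (ℕ → Bool) → ℕ → Set (ℕ → ℕ) := fun σ k => auxCyl (s k).1.1 ((s k).1.2 (auxBr σ k))
  have hC : ∀ σ k, C σ (k + 1) ⊆ C σ k := by
    intro σ k
    exact hn1 k (s k) (auxBr σ k) (σ k)
  have hCanti : ∀ σ, Antitone (C σ) := fun σ => antitone_nat_of_succ_le (hC σ)
  -- positivity witnesses
  have hwit : ∀ k, ∃ z, ∀ i : AuxI k, ∃ w ∈ auxCyl (s k).1.1 ((s k).1.2 i), (g w).1 = z := by
    intro k
    obtain ⟨z, hz⟩ := (s k).2.2 ∅ (AuxSmall.of_uniq MeasurableSet.empty (fun _ _ _ h => h.elim))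
    exact ⟨z, fun i => let ⟨w, h1, h2, _⟩ := hz i; ⟨w, h1, h2⟩⟩
  choose zk wk hwk hzk using hwit
  let L : (ℕ → Bool) → ℕ → ℕ := fun σ i => wk (i + 1) (auxBr σ (i + 1)) i
  have hL : ∀ σ k (w : ℕ → ℕ), w ∈ C σ k → ∀ i < k, w i = L σ i := by
    intro σ k w hw i hi
    have h1 : w ∈ C σ (i + 1) := hCanti σ hi hw
    have h2 : wk (i + 1) (auxBr σ (i + 1)) ∈ C σ (i + 1) := hwk (i + 1) (auxBr σ (i + 1))
    have hlt : i < (s (i + 1)).1.1 := lt_of_lt_of_le (Nat.lt_succ_self i) (s (i + 1)).2.1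
    exact (h1 ⟨i, hlt⟩).trans (h2 ⟨i, hlt⟩).symm
  have hLC : ∀ σ k, L σ ∈ C σ k := by
    intro σ k j
    have h2 : wk (max k (j + 1)) (auxBr σ _) ∈ C σ (max k (j + 1)) :=
      hwk (max k (j + 1)) (auxBr σ _)
    have h3 := hL σ _ _ h2 j (lt_of_lt_of_le (Nat.lt_succ_self _) (le_max_right _ _))
    rw [← h3]
    exact hCanti σ (le_max_left k (j + 1)) h2 j
  have hlim : ∀ σ, Filter.Tendsto zk Filter.atTop (nhds (g (L σ)).1) := by
    intro σ
    have h1 : Filter.Tendsto (fun k => wk k (auxBr σ k)) Filter.atTop (nhds (L σ)) := by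
      rw [tendsto_pi_nhds]
      intro i
      refine tendsto_const_nhds.congr' ?_
      filter_upwards [Filter.eventually_gt_atTop i] with k hk
      exact (hL σ k _ (hwk k _) i hk).symm
    have h2 := (hg.fst.tendsto (L σ)).comp h1
    refine h2.congr fun k => ?_
    exact hzk k _
  have hinj : Function.Injective fun σ => (g (L σ)).2 := by
    intro σ τ h
    by_contra hne
    have hex : ∃ k, σ k ≠ τ k := by
      by_contra! h; exact hne (funext h)
    classical
    have hk := Nat.find_spec hex
    have hmin : ∀ i < Nat.find hex, σ i = τ i := fun i hi => by
      simpa using Nat.find_min hex hi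
    generalize Nat.find hex = k at hk hmin
    have hbr := auxBr_congr σ τ k hmin
    have h1 := hLC σ (k + 1)
    have h2 := hLC τ (k + 1)
    have h3 := hn2 k (s k) (auxBr σ k)
    change L σ ∈ auxCyl (s (k+1)).1.1 ((s (k+1)).1.2 (auxBr σ k, σ k)) at h1
    change L τ ∈ auxCyl (s (k+1)).1.1 ((s (k+1)).1.2 (auxBr τ k, τ k)) at h2
    rw [← hbr] at h2
    rw [← hs] at h3
    cases hσ : σ k <;> cases hτ : τ k
    · exact hk (hσ.trans hτ.symm)
    · rw [hσ] at h1; rw [hτ] at h2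
      exact h3 _ h2 _ h1 h.symm
    · rw [hσ] at h1; rw [hτ] at h2
      exact h3 _ h1 _ h2 h
    · exact hk (hσ.trans hτ.symm)
  let σ0 : ℕ → Bool := fun _ => true
  have hsub : range (fun σ => (g (L σ)).2) ⊆ {y | ((g (L σ0)).1, y) ∈ range g} := by
    rintro _ ⟨σ, rfl⟩
    refine ⟨L σ, ?_⟩
    rw [tendsto_nhds_unique (hlim σ0) (hlim σ)]
  have hcount := (hc (g (L σ0)).1).mono hsub
  have hcount' : Countable (ℕ → Bool) := by
    have := hcount.to_subtype
    exact (Set.rangeFactorization_injective.2 hinj).countable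
  obtain ⟨e, he⟩ := exists_injective_nat (ℕ → Bool)
  classical
  refine Function.cantor_injective (fun S : Set ℕ => e (fun n => decide (n ∈ S))) ?_
  intro S T hST
  have h1 := he hST
  ext n
  have h2 := congrFun h1 n
  simpa using h2

end AuxAnalytic

section AuxAnalytic2

variable {Z Y : Type*} [TopologicalSpace Z] [PolishSpace Z] [MeasurableSpace Z] [BorelSpace Z]
  [TopologicalSpace Y] [PolishSpace Y] [MeasurableSpace Y] [BorelSpace Y]

/-- Lusin–Novikov: Borel sets with countable sections have Borel projections. -/
theorem aux_LN (S : Set (Z × Y)) (hS : MeasurableSet S) (hc : ∀ z, {y | (z, y) ∈ S}.Countable) :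
    MeasurableSet {z | ∃ y, (z, y) ∈ S} := by
  obtain ⟨V, ⟨B, h1, h2, rfl⟩, hSV⟩ := aux_cover S hS.analyticSet hc
  have : {z | ∃ y, (z, y) ∈ S} = ⋃ k, Prod.fst '' (S ∩ B k) := by
    ext z
    simp only [mem_ofPred_eq, mem_iUnion, mem_image, Prod.exists, exists_and_right, exists_eq_right]
    constructor
    · rintro ⟨y, hy⟩
      obtain ⟨k, hk⟩ := mem_iUnion.1 (hSV hy)
      exact ⟨k, y, hy, hk⟩
    · rintro ⟨k, y, hy, hk⟩
      exact ⟨y, hy⟩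
  rw [this]
  refine MeasurableSet.iUnion fun k => ?_
  refine (hS.inter (h1 k)).image_of_continuousOn_injOn continuous_fst.continuousOn ?_
  rintro ⟨z, y⟩ hp ⟨z', y'⟩ hq heq
  simp only at heq
  subst heq
  rw [h2 k z y y' hp.2 hq.2]

/-- The base case. -/
theorem aux_base (A : Set Z) (hA : AnalyticSet A) (E : Z → Z → Prop) 
    (hEB : MeasurableSet {p : Z × Z | E p.1 p.2}) (hc : ∀ x, {y ∈ A | E x y}.Countable) :
    ∃ B : Set Z, MeasurableSet B ∧ A ⊆ B ∧ ∀ x, {y ∈ B | E x y}.Countable := by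
  have hR : AnalyticSet {p : Z × Z | p.2 ∈ A ∧ E p.1 p.2} :=
    aux_inter (aux_preimage hA continuous_snd) hEB.analyticSet
  obtain ⟨V, hV, hRV⟩ := aux_cover _ hR hc
  have hT : AnalyticSet {y | ∃ z, E z y ∧ (z, y) ∉ V} := by
    have := (hEB.inter hV.meas.compl).analyticSet.image_of_continuous continuous_snd
    convert this using 1
    ext y
    simp
  obtain ⟨B, h1, h2, h3⟩ := hA.measurablySeparable hT (by
    rw [Set.disjoint_left]
    rintro y hy ⟨z, hz, hzy⟩
    exact hzy (hRV ⟨hy, hz⟩))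
  refine ⟨B, h3, h1, fun x => (hV.countable x).mono ?_⟩
  rintro y ⟨hy, hxy⟩
  by_contra hne
  exact Set.disjoint_left.1 h2 ⟨x, hxy, hne⟩ hy

/-- Mazurkiewicz–Sierpinski. -/
theorem aux_MS (R : Set (Z × Y)) (hR : AnalyticSet R) :
    AnalyticSet {z | ¬ {y | (z, y) ∈ R}.Countable} := by
  rw [AnalyticSet] at hR
  rcases hR with rfl | ⟨g, hg, rfl⟩
  · simpa using analyticSet_empty
  let D : Set (ℕ → ℕ → ℕ) := {w | (∀ k, (g (w k)).1 = (g (w 0)).1) ∧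
    ∀ k N, ∃ j, (∀ i, i < N → w j i = w k i) ∧ ¬ (g (w j)).2 = (g (w k)).2}
  have hg1 : Continuous fun w => (g w).1 := hg.fst
  have hg2 : Continuous fun w => (g w).2 := hg.snd
  have c1 : ∀ k, Continuous fun w : ℕ → ℕ → ℕ => (g (w k)).1 :=
    fun k => hg1.comp (continuous_apply k)
  have c2 : ∀ k, Continuous fun w : ℕ → ℕ → ℕ => (g (w k)).2 :=
    fun k => hg2.comp (continuous_apply k)
  have c3 : ∀ k i, Continuous fun w : ℕ → ℕ → ℕ => w k i :=
    fun k i => (continuous_apply i).comp (continuous_apply k)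
  have hD : MeasurableSet D := by
    have hDe : D = (⋂ k, {w : ℕ → ℕ → ℕ | (g (w k)).1 = (g (w 0)).1}) ∩
        ⋂ k : ℕ, ⋂ N : ℕ, ⋃ j : ℕ, (⋂ i : ℕ, ⋂ (_ : i < N), {w : ℕ → ℕ → ℕ | w j i = w k i}) ∩
          {w : ℕ → ℕ → ℕ | (g (w j)).2 = (g (w k)).2}ᶜ := by
      ext w
      simp [D]
    rw [hDe]
    refine MeasurableSet.inter ?_ ?_
    · exact MeasurableSet.iInter fun k => (isClosed_eq (c1 k) (c1 0)).measurableSet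
    · refine MeasurableSet.iInter fun k => MeasurableSet.iInter fun N =>
        MeasurableSet.iUnion fun j => MeasurableSet.inter ?_ ?_
      · exact MeasurableSet.iInter fun i => MeasurableSet.iInter fun _ =>
          (isClosed_eq (c3 j i) (c3 k i)).measurableSet
      · exact (isClosed_eq (c2 j) (c2 k)).measurableSet.compl
  have him := hD.analyticSet.image_of_continuous (c1 0)
  convert him using 1
  ext z
  constructor
  · intro hz
    let F : Set (ℕ → ℕ) := {w | (g w).1 = z}
    let sec : Set (ℕ → ℕ) → Set Y := fun O => (fun w => (g w).2) '' (O ∩ F)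
    let T : Set (ℕ → ℕ) := {w | w ∈ F ∧ ∀ O, IsOpen O → w ∈ O → ¬ (sec O).Countable}
    have hTc : (sec Tᶜ).Countable := by
      let J := {p : Σ N : ℕ, (Fin N → ℕ) // (sec (auxCyl p.1 p.2)).Countable}
      refine (countable_iUnion fun j : J => j.2).mono ?_
      rintro _ ⟨w, ⟨hwT, hwF⟩, rfl⟩
      have : ∃ O, IsOpen O ∧ w ∈ O ∧ (sec O).Countable := by
        by_contra! hcon
        exact hwT ⟨hwF, hcon⟩
      obtain ⟨O, hO, hwO, hcO⟩ := this
      obtain ⟨N, hN⟩ := auxCyl_nhds w O hO hwO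
      refine mem_iUnion.2 ⟨⟨⟨N, fun i => w i⟩, hcO.mono ?_⟩, ?_⟩
      · exact image_mono (inter_subset_inter_left _ (hN N le_rfl))
      · exact ⟨w, ⟨fun i => rfl, hwF⟩, rfl⟩
    have hTn : T.Nonempty := by
      by_contra hne
      rw [not_nonempty_iff_eq_empty] at hne
      apply hz
      refine hTc.mono ?_
      rintro y ⟨w, hw⟩
      refine ⟨w, ⟨by rw [hne]; simp, ?_⟩, ?_⟩
      · show (g w).1 = z
        rw [hw]
      · show (g w).2 = y
        rw [hw]
    have hTs : ∀ w ∈ T, ∀ O, IsOpen O → w ∈ O → ∃ w' ∈ T, w' ∈ O ∧ ¬ (g w').2 = (g w).2 := by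
      intro w hw O hO hwO
      by_contra! hcon
      refine hw.2 O hO hwO ((hTc.union (countable_singleton (g w).2)).mono ?_)
      rintro _ ⟨v, ⟨hvO, hvF⟩, rfl⟩
      by_cases hv : v ∈ T
      · exact Or.inr (hcon v hv hvO)
      · exact Or.inl ⟨v, ⟨hv, hvF⟩, rfl⟩
    have : Nonempty T := hTn.to_subtype
    refine ⟨fun k => (TopologicalSpace.denseSeq T k).1, ⟨?_, ?_⟩, ?_⟩
    · intro k
      exact (TopologicalSpace.denseSeq T k).2.1.trans (TopologicalSpace.denseSeq T 0).2.1.symm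
    · intro k N
      set w := (TopologicalSpace.denseSeq T k).1 with hw
      obtain ⟨w', h1, h2, h3⟩ := hTs w (TopologicalSpace.denseSeq T k).2
        (auxCyl N fun i => w i) (auxCyl_open _ _) (fun i => rfl)
      have hop : IsOpen {x : T | x.1 ∈ auxCyl N (fun i => w i) ∧ ¬ (g x.1).2 = (g w).2} := by
        refine IsOpen.inter ?_ ?_
        · exact (auxCyl_open N fun i => w i).preimage continuous_subtype_val
        · exact (isClosed_eq (hg2.comp continuous_subtype_val) continuous_const).isOpen_compl
      obtain ⟨j, hj⟩ := (TopologicalSpace.denseRange_denseSeq T).exists_mem_open hop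
        ⟨⟨w', h1⟩, h2, h3⟩
      exact ⟨j, fun i hi => hj.1 ⟨i, hi⟩, hj.2⟩
    · exact (TopologicalSpace.denseSeq T 0).2.1
  · rintro ⟨w, ⟨hw1, hw2⟩, rfl⟩ hcount
    let P : Set (ℕ → ℕ) := closure (range w)
    have hP : ∀ x ∈ P, (g x).1 = (g (w 0)).1 := by
      intro x hx
      have hcl : IsClosed {x | (g x).1 = (g (w 0)).1} := isClosed_eq hg1 continuous_const
      refine closure_minimal ?_ hcl hx
      rintro _ ⟨k, rfl⟩
      exact hw1 k
    have hPc : IsClosed P := isClosed_closure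
    have := hPc.polishSpace
    let _ := TopologicalSpace.upgradeIsCompletelyMetrizable P
    have : Nonempty P := ⟨⟨w 0, subset_closure (mem_range_self 0)⟩⟩
    have hcs := hcount.to_subtype
    obtain ⟨y, x, hx⟩ := nonempty_interior_of_iUnion_of_closed
      (f := fun y : {y | ((g (w 0)).1, y) ∈ range g} => {x : P | (g x.1).2 = y.1})
      (fun y => isClosed_eq (hg2.comp continuous_subtype_val) continuous_const)
      (by
        rw [eq_univ_iff_forall]
        intro x
        refine mem_iUnion.2 ⟨⟨(g x.1).2, ⟨x.1, ?_⟩⟩, rfl⟩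
        rw [← hP x.1 x.2])
    obtain ⟨O, hO, hOi⟩ := isOpen_induced_iff.1
      (isOpen_interior (s := {x : P | (g x.1).2 = y.1}))
    have hxO : x.1 ∈ O := by
      have : x ∈ Subtype.val ⁻¹' O := by rw [hOi]; exact hx
      exact this
    have hval : ∀ k, w k ∈ O → (g (w k)).2 = y.1 := by
      intro k hk
      have : (⟨w k, subset_closure (mem_range_self k)⟩ : P) ∈ Subtype.val ⁻¹' O := hk
      rw [hOi] at this
      have h2 := interior_subset this
      exact h2
    obtain ⟨_, hkO, ⟨k, rfl⟩⟩ := mem_closure_iff.1 x.2 O hO hxO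
    obtain ⟨N, hN⟩ := auxCyl_nhds (w k) O hO hkO
    obtain ⟨j, hj1, hj2⟩ := hw2 k N
    exact hj2 ((hval j (hN N le_rfl fun i => hj1 i i.2)).trans (hval k hkO).symm)

end AuxAnalytic2

section AuxGraph

/-- Points joined by a path of length at most `n`. -/
def AuxBall {X : Type*} (G : X → X → Prop) (n : ℕ) (x y : X) : Prop :=
  ∃ m ≤ n, ∃ p : ℕ → X, p 0 = x ∧ p m = y ∧ ∀ i < m, G (p i) (p (i + 1))

theorem aux_walk_of_fun {X : Type*} (Γ : SimpleGraph X) : ∀ (k : ℕ) (p : ℕ → X),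
    (∀ i < k, Γ.Adj (p i) (p (i + 1))) →
    ∃ q : Γ.Walk (p 0) (p k), q.length = k ∧ ∀ i ≤ k, q.getVert i = p i
  | 0, p, _ => ⟨SimpleGraph.Walk.nil, rfl, fun i hi => by
      obtain rfl : i = 0 := by omega
      rfl⟩
  | k + 1, p, h => by
    obtain ⟨q, h1, h2⟩ := aux_walk_of_fun Γ k (fun i => p (i + 1))
      (fun i hi => h (i + 1) (by omega))
    refine ⟨SimpleGraph.Walk.cons (h 0 (by omega)) q, by simp [h1], ?_⟩
    intro i hi
    cases i with
    | zero => simp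
    | succ i =>
      rw [SimpleGraph.Walk.getVert_cons_succ]
      exact h2 i (by omega)

theorem auxBall_iff {X : Type*} (Γ : SimpleGraph X) (n : ℕ) (x y : X) :
    AuxBall Γ.Adj n x y ↔ ∃ q : Γ.Walk x y, q.IsPath ∧ q.length ≤ n := by
  classical
  constructor
  · rintro ⟨m, hm, p, rfl, rfl, h⟩
    obtain ⟨q, h1, _⟩ := aux_walk_of_fun Γ m p h
    exact ⟨q.bypass, q.bypass_isPath, (q.length_bypass_le_length.trans h1.le).trans hm⟩
  · rintro ⟨q, _, hq⟩
    exact ⟨q.length, hq, q.getVert, by simp, by simp, fun i hi => q.adj_getVert_succ hi⟩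

theorem auxBall_walk {X : Type*} (Γ : SimpleGraph X) {n : ℕ} {x y : X} (q : Γ.Walk x y)
    (h : q.length ≤ n) : AuxBall Γ.Adj n x y :=
  ⟨q.length, h, q.getVert, by simp, by simp, fun i hi => q.adj_getVert_succ hi⟩

theorem auxBall_symm {X : Type*} (Γ : SimpleGraph X) {n : ℕ} {x y : X}
    (h : AuxBall Γ.Adj n x y) : AuxBall Γ.Adj n y x := by
  obtain ⟨q, _, hq⟩ := (auxBall_iff Γ n x y).1 h
  exact auxBall_walk Γ q.reverse (by simpa using hq)

theorem auxBall_trans {X : Type*} (Γ : SimpleGraph X) {n m k : ℕ} {x y z : X}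
    (h : AuxBall Γ.Adj n x y) (h' : AuxBall Γ.Adj m y z) (hk : n + m ≤ k) :
    AuxBall Γ.Adj k x z := by
  obtain ⟨q, _, hq⟩ := (auxBall_iff Γ n x y).1 h
  obtain ⟨r, _, hr⟩ := (auxBall_iff Γ m y z).1 h'
  exact auxBall_walk Γ (q.append r) (by simp; omega)

theorem aux_tree {X : Type*} (Γ : SimpleGraph X) (hΓ : Γ.IsAcyclic) (y c : X) (hyc : y ≠ c)
    (hr : Γ.Reachable y c) :
    ∃ z, ∀ s j, AuxBall Γ.Adj (j + 1) y s → ¬ AuxBall Γ.Adj j y s → ¬ AuxBall Γ.Adj j z s →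
      ∀ n, AuxBall Γ.Adj n s c → AuxBall Γ.Adj (n - (j + 1)) y c := by
  classical
  obtain ⟨q, hq⟩ := hr.exists_isPath
  cases q with
  | nil => exact absurd rfl hyc
  | @cons _ z _ h q' =>
    refine ⟨z, ?_⟩
    intro s j h1 h2 h3 n h4
    obtain ⟨r, hr, hrl⟩ := (auxBall_iff Γ _ _ _).1 h1
    obtain ⟨t, ht, htl⟩ := (auxBall_iff Γ _ _ _).1 h4
    cases r with
    | nil => exact absurd (auxBall_walk Γ SimpleGraph.Walk.nil (by simp)) h2
    | @cons _ z' _ h' r' =>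
      by_cases hz : z' = z
      · subst hz
        refine absurd (auxBall_walk Γ r' ?_) h3
        simpa using hrl
      · have hpath : ((SimpleGraph.Walk.cons h' r').reverse.append
            (SimpleGraph.Walk.cons h q')).IsPath := by
          rw [hΓ.isPath_iff_isChain]
          have e1 := (hΓ.isPath_iff_isChain _).1 hr.reverse
          have e2 := (hΓ.isPath_iff_isChain _).1 hq
          rw [SimpleGraph.Walk.edges_append, List.isChain_append]
          refine ⟨e1, e2, ?_⟩
          intro a ha b hb
          simp at ha hb
          subst ha hb
          intro heq
          simp at heq
          rcases heq with heq | heq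
          · exact hz (heq.1.trans heq.2)
          · exact hz heq
        have huniq := hΓ.path_unique ⟨_, hpath⟩ ⟨t, ht⟩
        have hlen : ((SimpleGraph.Walk.cons h' r').reverse.append
            (SimpleGraph.Walk.cons h q')).length = t.length :=
          congrArg SimpleGraph.Walk.length (congrArg Subtype.val huniq)
        have hge : j + 1 ≤ (SimpleGraph.Walk.cons h' r').length := by
          by_contra hlt
          exact h2 (auxBall_walk Γ (SimpleGraph.Walk.cons h' r') (by omega))
        rw [SimpleGraph.Walk.length_append, SimpleGraph.Walk.length_reverse] at hlen
        exact auxBall_walk Γ (SimpleGraph.Walk.cons h q') (by omega)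

variable {X : Type*} [TopologicalSpace X] [PolishSpace X] [MeasurableSpace X] [BorelSpace X]

theorem auxBall_meas (Γ : SimpleGraph X) (hΓ : Γ.IsAcyclic)
    (hG : MeasurableSet {p : X × X | Γ.Adj p.1 p.2})
    (hE : MeasurableSet {p : X × X | Γ.Reachable p.1 p.2}) (n : ℕ) :
    MeasurableSet {p : X × X | AuxBall Γ.Adj n p.1 p.2} := by
  have hstep : ∀ m, MeasurableSet {p : ℕ → X | ∀ i < m, Γ.Adj (p i) (p (i + 1))} := by
    intro m
    have : {p : ℕ → X | ∀ i < m, Γ.Adj (p i) (p (i + 1))} =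
        ⋂ i : ℕ, ⋂ (_ : i < m), (fun p : ℕ → X => (p i, p (i + 1))) ⁻¹'
          {p : X × X | Γ.Adj p.1 p.2} := by
      ext; simp
    rw [this]
    exact MeasurableSet.iInter fun i => MeasurableSet.iInter fun _ =>
      (show Measurable (fun p : ℕ → X => (p i, p (i + 1))) by fun_prop) hG
  have hinj : ∀ m, MeasurableSet {p : ℕ → X | ∀ i ≤ m, ∀ j ≤ m, p i = p j → i = j} := by
    intro m
    have : {p : ℕ → X | ∀ i ≤ m, ∀ j ≤ m, p i = p j → i = j} =
        ⋂ i : ℕ, ⋂ (_ : i ≤ m), ⋂ j : ℕ, ⋂ (_ : j ≤ m), ⋂ (_ : ¬ i = j),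
          {p : ℕ → X | p i = p j}ᶜ := by
      ext p
      simp only [mem_ofPred_eq, mem_iInter, mem_compl_iff]
      refine forall₄_congr fun i _ j _ => ?_
      tauto
    rw [this]
    refine MeasurableSet.iInter fun i => MeasurableSet.iInter fun _ =>
      MeasurableSet.iInter fun j => MeasurableSet.iInter fun _ =>
      MeasurableSet.iInter fun _ => MeasurableSet.compl ?_
    exact measurableSet_eq_fun (by fun_prop) (by fun_prop)
  apply AnalyticSet.measurableSet_of_compl
  · have : {p : X × X | AuxBall Γ.Adj n p.1 p.2} = ⋃ m : Fin (n + 1),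
        (fun p : ℕ → X => (p 0, p m)) '' {p : ℕ → X | ∀ i < (m : ℕ), Γ.Adj (p i) (p (i + 1))} := by
      ext ⟨x, y⟩
      simp only [AuxBall, mem_ofPred_eq, mem_iUnion, mem_image, Prod.mk.injEq]
      constructor
      · rintro ⟨m, hm, p, h1, h2, h3⟩
        exact ⟨⟨m, by omega⟩, p, h3, h1, h2⟩
      · rintro ⟨m, p, h3, h1, h2⟩
        exact ⟨m, by omega, p, h1, h2, h3⟩
    rw [this]
    exact AnalyticSet.iUnion fun m => (hstep m).analyticSet.image_of_continuous (by fun_prop)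
  · have : {p : X × X | AuxBall Γ.Adj n p.1 p.2}ᶜ = {p : X × X | Γ.Reachable p.1 p.2}ᶜ ∪
        ⋃ m : ℕ, (fun p : ℕ → X => (p 0, p (n + 1 + m))) ''
          ({p : ℕ → X | ∀ i < n + 1 + m, Γ.Adj (p i) (p (i + 1))} ∩
            {p : ℕ → X | ∀ i ≤ n + 1 + m, ∀ j ≤ n + 1 + m, p i = p j → i = j}) := by
      ext ⟨x, y⟩
      simp only [mem_compl_iff, mem_union, mem_ofPred_eq, mem_iUnion, mem_image, Prod.mk.injEq,
        mem_inter_iff]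
      constructor
      · intro hb
        by_cases hr : Γ.Reachable x y
        · right
          obtain ⟨q, hq⟩ := hr.exists_isPath
          have hlen : n < q.length := by
            by_contra hlt
            exact hb (auxBall_walk Γ q (by omega))
          obtain ⟨m, hm⟩ : ∃ m, q.length = n + 1 + m := ⟨q.length - (n + 1), by omega⟩
          refine ⟨m, q.getVert, ⟨?_, ?_⟩, by simp, by rw [← hm]; simp⟩
          · intro i hi
            exact q.adj_getVert_succ (by omega)
          · intro i hi j hj hij
            exact hq.getVert_injOn (by show i ≤ _; omega) (by show j ≤ _; omega) hij
        · exact Or.inl hr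
      · rintro (hr | ⟨m, p, ⟨h1, h2⟩, rfl, rfl⟩) hb
        · obtain ⟨q, _, _⟩ := (auxBall_iff Γ _ _ _).1 hb
          exact hr q.reachable
        · obtain ⟨q, hq, hql⟩ := (auxBall_iff Γ _ _ _).1 hb
          obtain ⟨r, hr1, hr2⟩ := aux_walk_of_fun Γ _ p h1
          have hrp : r.IsPath := by
            rw [← SimpleGraph.Walk.IsPath.getVert_injOn_iff]
            intro i hi j hj hij
            have hi' : i ≤ n + 1 + m := by rw [← hr1]; exact hi
            have hj' : j ≤ n + 1 + m := by rw [← hr1]; exact hj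
            rw [hr2 i hi', hr2 j hj'] at hij
            exact h2 i hi' j hj' hij
          have huniq := hΓ.path_unique ⟨_, hq⟩ ⟨_, hrp⟩
          have hlen : q.length = r.length :=
            congrArg SimpleGraph.Walk.length (congrArg Subtype.val huniq)
          omega
    rw [this]
    refine aux_union hE.compl.analyticSet (AnalyticSet.iUnion fun m => ?_)
    exact ((hstep _).inter (hinj _)).analyticSet.image_of_continuous (by fun_prop)

theorem aux_main (Γ : SimpleGraph X) (hΓ : Γ.IsAcyclic)
    (hG : MeasurableSet {p : X × X | Γ.Adj p.1 p.2})
    (hE : MeasurableSet {p : X × X | Γ.Reachable p.1 p.2}) (n : ℕ) :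
    ∀ A : Set X, AnalyticSet A →
    (∀ x, ∃ C : Set X, C.Countable ∧ ∀ y ∈ A, Γ.Reachable x y → ∃ c ∈ C, AuxBall Γ.Adj n y c) →
    ∃ B : Set X, MeasurableSet B ∧ (∀ x ∈ A, ∃ b ∈ B, AuxBall Γ.Adj n x b) ∧
      ∀ x, {y ∈ B | Γ.Reachable x y}.Countable := by
  have hreach : ∀ {k x y}, AuxBall Γ.Adj k x y → Γ.Reachable x y := by
    intro k x y h
    obtain ⟨q, _, _⟩ := (auxBall_iff Γ _ _ _).1 h
    exact q.reachable
  induction n using Nat.strong_induction_on with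
  | _ n IH =>
  intro A hA hcov
  have inner : ∀ j ≤ n, ∃ A' B' : Set X, AnalyticSet A' ∧ A' ⊆ A ∧ MeasurableSet B' ∧
      (∀ x, {y ∈ B' | Γ.Reachable x y}.Countable) ∧
      (∀ x ∈ A, x ∈ A' ∨ ∃ b ∈ B', AuxBall Γ.Adj n x b) ∧
      ∀ y, {s ∈ A' | AuxBall Γ.Adj j y s}.Countable := by
    intro j
    induction j with
    | zero =>
      intro _
      refine ⟨A, ∅, hA, Subset.rfl, MeasurableSet.empty, by simp, fun x hx => Or.inl hx, ?_⟩
      intro y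
      refine (countable_singleton y).mono ?_
      rintro s ⟨_, m, hm, p, h1, h2, _⟩
      obtain rfl : m = 0 := by omega
      exact h2.symm.trans h1
    | succ j ihj =>
      intro hj
      obtain ⟨A', B', a1, a2, b1, b2, h1, h2⟩ := ihj (by omega)
      have hU : AnalyticSet {y | ¬ {s | (y, s) ∈ {p : X × X | p.2 ∈ A' ∧
          AuxBall Γ.Adj (j + 1) p.1 p.2}}.Countable} :=
        aux_MS _ (aux_inter (aux_preimage a1 continuous_snd)
          (auxBall_meas Γ hΓ hG hE (j + 1)).analyticSet)
      obtain ⟨B'', c1, c2, c3⟩ := IH (n - (j + 1)) (by omega) _ hU (by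
        intro x
        obtain ⟨C, hC, hC'⟩ := hcov x
        refine ⟨C, hC, ?_⟩
        intro y hy hxy
        by_contra! hcon
        apply hy
        have hsub : {s | (y, s) ∈ {p : X × X | p.2 ∈ A' ∧ AuxBall Γ.Adj (j + 1) p.1 p.2}} ⊆
            {s ∈ A' | AuxBall Γ.Adj j y s} ∪ ⋃ c ∈ C, {s ∈ A' | AuxBall Γ.Adj (j + 1) y s ∧
              ¬ AuxBall Γ.Adj j y s ∧ AuxBall Γ.Adj n s c} := by
          rintro s ⟨hs, hys⟩
          by_cases hjs : AuxBall Γ.Adj j y s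
          · exact Or.inl ⟨hs, hjs⟩
          · obtain ⟨c, hc, hsc⟩ := hC' s (a2 hs) (hxy.trans (hreach hys))
            exact Or.inr (mem_biUnion hc ⟨hs, hys, hjs, hsc⟩)
        refine ((h2 y).union (hC.biUnion fun c hc => ?_)).mono hsub
        by_cases hyc : y = c
        · subst hyc
          exact absurd (auxBall_walk Γ SimpleGraph.Walk.nil (by simp)) (hcon y hc)
        by_cases hr : Γ.Reachable y c
        · obtain ⟨z, hz⟩ := aux_tree Γ hΓ y c hyc hr
          refine (h2 z).mono ?_
          rintro s ⟨hs, s1, s2, s3⟩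
          refine ⟨hs, ?_⟩
          by_contra hzs
          exact hcon c hc (hz s j s1 s2 hzs n s3)
        · refine countable_empty.mono ?_
          rintro s ⟨hs, s1, s2, s3⟩
          exact hr ((hreach s1).trans (hreach s3)))
      have hV : MeasurableSet {x | ∃ b, (x, b) ∈ {p : X × X | p.2 ∈ B'' ∧
          AuxBall Γ.Adj n p.1 p.2}} := by
        refine aux_LN _ ((measurable_snd c1).inter (auxBall_meas Γ hΓ hG hE n)) ?_
        intro x
        refine (c3 x).mono ?_
        rintro b ⟨hb, hxb⟩
        exact ⟨hb, hreach hxb⟩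
      refine ⟨A' ∩ {x | ∃ b, (x, b) ∈ {p : X × X | p.2 ∈ B'' ∧
          AuxBall Γ.Adj n p.1 p.2}}ᶜ, B' ∪ B'', aux_inter a1 hV.compl.analyticSet,
          inter_subset_left.trans a2, b1.union c1, ?_, ?_, ?_⟩
      · intro x
        refine ((b2 x).union (c3 x)).mono ?_
        rintro y ⟨hy | hy, hxy⟩
        · exact Or.inl ⟨hy, hxy⟩
        · exact Or.inr ⟨hy, hxy⟩
      · intro x hx
        by_cases hxV : ∃ b, (x, b) ∈ {p : X × X | p.2 ∈ B'' ∧ AuxBall Γ.Adj n p.1 p.2}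
        · obtain ⟨b, hb, hxb⟩ := hxV
          exact Or.inr ⟨b, Or.inr hb, hxb⟩
        · rcases h1 x hx with h | ⟨b, hb, hxb⟩
          · exact Or.inl ⟨h, hxV⟩
          · exact Or.inr ⟨b, Or.inl hb, hxb⟩
      · intro y
        by_cases hy : {s | (y, s) ∈ {p : X × X | p.2 ∈ A' ∧
          AuxBall Γ.Adj (j + 1) p.1 p.2}}.Countable
        · refine hy.mono ?_
          rintro s ⟨hs, hys⟩
          exact ⟨hs.1, hys⟩
        · obtain ⟨b, hb, hyb⟩ := c2 y hy
          refine countable_empty.mono ?_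
          rintro s ⟨hs, hys⟩
          exact hs.2 ⟨b, hb, auxBall_trans Γ (auxBall_symm Γ hys) hyb (by omega)⟩
  obtain ⟨A', B', a1, a2, b1, b2, h1, h2⟩ := inner n le_rfl
  obtain ⟨B, c1, c2, c3⟩ := aux_base A' a1 Γ.Reachable hE (by
    intro x
    obtain ⟨C, hC, hC'⟩ := hcov x
    refine (hC.biUnion fun c _ => h2 c).mono ?_
    rintro s ⟨hs, hxs⟩
    obtain ⟨c, hc, hsc⟩ := hC' s (a2 hs) hxs
    exact mem_biUnion hc ⟨hs, auxBall_symm Γ hsc⟩)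
  refine ⟨B' ∪ B, b1.union c1, ?_, ?_⟩
  · intro x hx
    rcases h1 x hx with h | ⟨b, hb, hxb⟩
    · exact ⟨x, Or.inr (c2 h), auxBall_walk Γ SimpleGraph.Walk.nil (by simp)⟩
    · exact ⟨b, Or.inl hb, hxb⟩
  · intro x
    refine ((b2 x).union (c3 x)).mono ?_
    rintro y ⟨hy | hy, hxy⟩
    · exact Or.inl ⟨hy, hxy⟩
    · exact Or.inr ⟨hy, hxy⟩

end AuxGraph




/-- Let `G` be an acyclic Borel graph whose connected components are
the classes of a Borel equivalence relation `E`, `A` analytic, and suppose every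
`x ∈ A` admits a countable subset of its `E`-class which is complete with respect to
`G`-paths of length at most `n` from points of `A ∩ [x]_E`. Then there is a Borel set
`B` such that every point of `A` is joined by a `G`-path of length at most `n` to a
point of `B`, and `E` restricted to `B` has countable classes. -/
theorem statement17 {X : Type*} [TopologicalSpace X] [PolishSpace X]
    [MeasurableSpace X] [BorelSpace X]
    (A : Set X) (hA : MeasureTheory.AnalyticSet A)
    (E : X → X → Prop) (hE : Equivalence E)
    (hEBorel : MeasurableSet {p : X × X | E p.1 p.2})
    (G : X → X → Prop) (hGirr : ∀ x, ¬ G x x) (hGsym : ∀ x y, G x y → G y x)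
    (hGBorel : MeasurableSet {p : X × X | G p.1 p.2})
    (hGacyclic : ¬ ∃ (n : ℕ) (p : ℕ → X), 3 ≤ n ∧
      (∀ i < n, ∀ j < n, p i = p j → i = j) ∧
      (∀ i < n, G (p i) (p (i + 1))) ∧ p 0 = p n)
    (hcomp : ∀ a b : X, E a b ↔ Relation.ReflTransGen G a b)
    (n : ℕ)
    (hcomplete : ∀ x ∈ A, ∃ C : Set X, C.Countable ∧ (∀ c ∈ C, E x c) ∧
      ∀ y ∈ A, E x y → ∃ c ∈ C, ∃ m ≤ n, ∃ p : ℕ → X, p 0 = y ∧ p m = c ∧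
        ∀ i < m, G (p i) (p (i + 1))) :
    ∃ B : Set X, MeasurableSet B ∧
      (∀ x ∈ A, ∃ b ∈ B, ∃ m ≤ n, ∃ p : ℕ → X, p 0 = x ∧ p m = b ∧
        ∀ i < m, G (p i) (p (i + 1))) ∧
      ∀ x ∈ B, {y ∈ B | E x y}.Countable := by
  let Γ : SimpleGraph X :=
    { Adj := G
      symm := ⟨fun x y h => hGsym x y h⟩
      loopless := ⟨fun x h => hGirr x h⟩ }
  have hΓ : Γ.IsAcyclic := by
    intro v c hc
    apply hGacyclic
    refine ⟨c.length, c.getVert, hc.three_le_length, ?_, ?_, by simp⟩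
    · intro i hi j hj hij
      exact hc.getVert_injOn' (by show i ≤ _; omega) (by show j ≤ _; omega) hij
    · intro i hi
      exact c.adj_getVert_succ hi
  have hEr : ∀ x y, E x y ↔ Γ.Reachable x y := fun x y => by
    rw [hcomp, SimpleGraph.reachable_iff_reflTransGen]
  have hE' : MeasurableSet {p : X × X | Γ.Reachable p.1 p.2} := by
    simpa only [hEr] using hEBorel
  obtain ⟨B, h1, h2, h3⟩ := aux_main Γ hΓ hGBorel hE' n A hA (by
    intro x
    by_cases hx : ∃ a ∈ A, E x a
    · obtain ⟨a, ha, hxa⟩ := hx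
      obtain ⟨C, hC, _, hC'⟩ := hcomplete a ha
      refine ⟨C, hC, fun y hy hxy => ?_⟩
      exact hC' y hy (hE.trans (hE.symm hxa) ((hEr x y).2 hxy))
    · refine ⟨∅, countable_empty, fun y hy hxy => ?_⟩
      exact absurd ⟨y, hy, (hEr x y).2 hxy⟩ hx)
  refine ⟨B, h1, h2, fun x _ => ?_⟩
  simpa only [hEr] using h3 x
end
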